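/- Let m̂ ∈ P₂(ℝ^d), φ ∈ UC_m̂, and let {Q_i}_{i∈ℤ} ⊂ (0,∞), {κ_i}_{i∈ℤ} ⊂ (0,1] satisfy 2Q_i ≤ 𝓡(Q_{i+1}) and G_{Q_i}^{κ_i} ⊆ B_{Q_i}(m̂) for all i, and set H_i = G_{Q_{i+1}}^{κ_{i+1}} \ G_{Q_i}^{κ_i}, assuming ∪_{i∈ℤ} H_i ∪ {m̂} = P₂(ℝ^d). For each i ∈ ℤ let δ_i > 0 and let k_i : P₂(ℝ^d) → U be a feedback with the one-step invariance property: for every m₀ ∈ H_{i−1}, every τ ∈ (0,δ_i], every W₂-continuous solution of the continuity equation on [0,τ] with constant control k_i(m₀) starting from m₀ remains in G_{Q_i}^{κ_i}. Define the global feedback k̂ by k̂(m) = k_i(m) for m ∈ H_{i−1} and k̂(m̂) = u₀ (an arbitrary fixed control). Fix i ∈ ℤ, let C₂(Q_i) = C₁e^{C₁δ_i}(1 + 2(C₁δ_i + ς₂(m̂) + Q_i)e^{2C₁δ_i}), let 0 < δ̂ < min{δ_i, Q_{i−1}/C₂(Q_i)} and θ ∈ Θ(δ̂, min{δ_i, Q_{i−1}/C₂(Q_i)}).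 Then every θ-trajectory under k̂ starting from any m_* ∈ G_{Q_i}^{κ_i} remains in G_{Q_i}^{κ_i} for all t ≥ 0. -/

import Mathlib

open MeasureTheory Set Filter Topology
open scoped ENNReal NNReal InnerProductSpace

noncomputable section

/-- `ℝ^d` with the Euclidean structure. -/
abbrev Ed (d : ℕ) : Type := EuclideanSpace ℝ (Fin d)

/-- A Borel probability measure with finite second moment. -/
def IsP2Meas {E : Type*} [NormedAddCommGroup E] [MeasurableSpace E] (μ : Measure E) : Prop :=
  IsProbabilityMeasure μ ∧ ∫⁻ x, (‖x‖₊ : ℝ≥0∞) ^ 2 ∂μ < ⊤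

/-- The Wasserstein space `P₂(ℝ^d)` of Borel probability measures with finite second moment. -/
def P2 (d : ℕ) : Type := {μ : Measure (Ed d) // IsP2Meas μ}

/-- `ς₂(μ)`, the square root of the second moment of `μ`. -/
def varsigma2 {d : ℕ} (μ : P2 d) : ℝ :=
  Real.sqrt (∫⁻ x, (‖x‖₊ : ℝ≥0∞) ^ 2 ∂μ.1).toReal

/-- `π` is a plan (coupling) between `μ` and `ν`. -/
def IsCoupling {d : ℕ} (π : Measure (Ed d × Ed d)) (μ ν : P2 d) : Prop :=
  π.map Prod.fst = μ.1 ∧ π.map Prod.snd = ν.1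

/-- The quadratic transport cost of a plan. -/
def Wcost {d : ℕ} (π : Measure (Ed d × Ed d)) : ℝ≥0∞ :=
  ∫⁻ p, (‖p.1 - p.2‖₊ : ℝ≥0∞) ^ 2 ∂π

/-- The 2-Wasserstein distance. -/
def W2 {d : ℕ} (μ ν : P2 d) : ℝ :=
  Real.sqrt (⨅ π ∈ {π : Measure (Ed d × Ed d) | IsCoupling π μ ν}, Wcost π).toReal

/-- `π ∈ Π_o(μ,ν)` : an optimal plan between `μ` and `ν`. -/
def IsOptPlan {d : ℕ} (π : Measure (Ed d × Ed d)) (μ ν : P2 d) : Prop :=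
  IsCoupling π μ ν ∧ ∀ π' : Measure (Ed d × Ed d), IsCoupling π' μ ν → Wcost π ≤ Wcost π'

/-- The closed Wasserstein ball `B_R(m̂)`. -/
def ballW {d : ℕ} (mhat : P2 d) (R : ℝ) : Set (P2 d) := {μ | W2 mhat μ ≤ R}

/-- The open Wasserstein ball `O_R(m̂)`. -/
def oballW {d : ℕ} (mhat : P2 d) (R : ℝ) : Set (P2 d) := {μ | W2 mhat μ < R}

/-- The Dirac measure at the origin as an element of `P₂(ℝ^d)`. -/
def dirac0 (d : ℕ) : P2 d :=
  ⟨Measure.dirac 0, ⟨by infer_instance, by rw [lintegral_dirac]; simp⟩⟩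

/-- The class `UC_m̂` : nonnegative, uniformly continuous on every bounded set,
positive-definite at `m̂`. -/
structure UCmem {d : ℕ} (mhat : P2 d) (φ : P2 d → ℝ) : Prop where
  nonneg : ∀ μ : P2 d, 0 ≤ φ μ
  unif_cont : ∀ R > (0 : ℝ), ∀ η > (0 : ℝ), ∃ δ > (0 : ℝ), ∀ μ ν : P2 d,
    W2 mhat μ ≤ R → W2 mhat ν ≤ R → W2 μ ν ≤ δ → |φ μ - φ ν| ≤ η
  zero_at : φ mhat = 0
  pos_off : ∀ μ : P2 d, μ ≠ mhat → 0 < φ μ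

/-- The inf-convolution `φ_κ`. -/
def infConv {d : ℕ} (φ : P2 d → ℝ) (κ : ℝ) (m : P2 d) : ℝ :=
  ⨅ μ : P2 d, (φ μ + 1 / (2 * κ ^ 2) * W2 m μ ^ 2)

/-- `S(R) = sup_{μ ∈ B_R(m̂)} φ(μ)`. -/
def Sfun {d : ℕ} (mhat : P2 d) (φ : P2 d → ℝ) (R : ℝ) : ℝ := sSup (φ '' ballW mhat R)

/-- `I(R) = inf_{μ ∉ O_R(m̂)} φ(μ)`. -/
def Ifun {d : ℕ} (mhat : P2 d) (φ : P2 d → ℝ) (R : ℝ) : ℝ := sInf (φ '' (oballW mhat R)ᶜ)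

/-- `G_R = {μ : φ(μ) ≤ I(R)/2}`. -/
def Gset {d : ℕ} (mhat : P2 d) (φ : P2 d → ℝ) (R : ℝ) : Set (P2 d) :=
  {μ | φ μ ≤ Ifun mhat φ R / 2}

/-- `G_R^κ = {μ : φ_κ(μ) ≤ I(R)/2}`. -/
def GsetK {d : ℕ} (mhat : P2 d) (φ : P2 d → ℝ) (κ R : ℝ) : Set (P2 d) :=
  {μ | infConv φ κ μ ≤ Ifun mhat φ R / 2}

/-- `𝓡(R) = sup{r ≥ 0 : B_r(m̂) ⊆ G_R}`. -/
def Rfun {d : ℕ} (mhat : P2 d) (φ : P2 d → ℝ) (R : ℝ) : ℝ :=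
  sSup {r : ℝ | 0 ≤ r ∧ ballW mhat r ⊆ Gset mhat φ R}

/-- `M_κ^ε(R) = κ√(2S(R)+ε²κ²) − εκ²`. -/
def Mke {d : ℕ} (mhat : P2 d) (φ : P2 d → ℝ) (κ ε R : ℝ) : ℝ :=
  κ * Real.sqrt (2 * Sfun mhat φ R + ε ^ 2 * κ ^ 2) - ε * κ ^ 2

/-- `M^ε(R) = R + √(2S(R)+ε²)`. -/
def Me {d : ℕ} (mhat : P2 d) (φ : P2 d → ℝ) (ε R : ℝ) : ℝ :=
  R + Real.sqrt (2 * Sfun mhat φ R + ε ^ 2)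

/-- `ω_R^ε(δ)`, the modulus of continuity of `φ` on `B_{M^ε(R)}(m̂)`. -/
def omegaR {d : ℕ} (mhat : P2 d) (φ : P2 d → ℝ) (ε R δ : ℝ) : ℝ :=
  sSup {c : ℝ | ∃ ν₁ ν₂ : P2 d, W2 ν₁ ν₂ ≤ δ ∧ W2 mhat ν₁ ≤ Me mhat φ ε R ∧
    W2 mhat ν₂ ≤ Me mhat φ ε R ∧ c = |φ ν₁ - φ ν₂|}

/-- `K_κ^ε(R) = εκ² + κ√(ε²κ² + 2ω_R^ε(M_κ^ε(R)))`. -/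
def Kke {d : ℕ} (mhat : P2 d) (φ : P2 d → ℝ) (κ ε R : ℝ) : ℝ :=
  ε * κ ^ 2 + κ * Real.sqrt (ε ^ 2 * κ ^ 2 + 2 * omegaR mhat φ ε R (Mke mhat φ κ ε R))

/-- `N_κ^ε(R,m) = εκ√(2φ_κ(m)) + ε·M_κ^ε(R)`. -/
def Nke {d : ℕ} (mhat : P2 d) (φ : P2 d → ℝ) (κ ε R : ℝ) (m : P2 d) : ℝ :=
  ε * κ * Real.sqrt (2 * infConv φ κ m) + ε * Mke mhat φ κ ε R

/-- `μ̄` is an Ekeland point for `(φ,κ,ε,m)`. -/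
def EkelandPt {d : ℕ} (φ : P2 d → ℝ) (κ ε : ℝ) (m μb : P2 d) : Prop :=
  (φ μb + 1 / (2 * κ ^ 2) * W2 m μb ^ 2 ≤ φ m - ε * W2 μb m) ∧
  ∀ μ : P2 d, φ μb + 1 / (2 * κ ^ 2) * W2 m μb ^ 2 ≤
    φ μ + 1 / (2 * κ ^ 2) * W2 m μ ^ 2 + ε * W2 μb μ

/-- The proximal subgradient inequality at `m` with target `μ`, slope measure `α`
and parameter `σ`. -/
def ProxIneq {d : ℕ} (φ : P2 d → ℝ) (ε σ : ℝ) (m : P2 d)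
    (α : Measure (Ed d × Ed d)) (μ : P2 d) : Prop :=
  ∀ β : Measure (Ed d × Ed d × Ed d), IsP2Meas β →
    IsCoupling (β.map fun z => (z.1, z.2.1)) m μ →
    β.map (fun z => (z.1, z.2.2)) = α →
    φ m + ∫ z, ⟪z.2.2, z.2.1 - z.1⟫_ℝ ∂β - σ * ∫ z, ‖z.2.1 - z.1‖ ^ 2 ∂β
      - ε * W2 m μ ≤ φ μ

/-- `α ∈ ∂_P^ε φ(m)` : proximal `ε`-subgradient. -/
def ProxSubgrad {d : ℕ} (φ : P2 d → ℝ) (ε : ℝ) (m : P2 d)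
    (α : Measure (Ed d × Ed d)) : Prop :=
  IsP2Meas α ∧ ∃ σ > (0 : ℝ), ∃ r > (0 : ℝ), ∀ μ : P2 d, W2 m μ ≤ r → ProxIneq φ ε σ m α μ

/-- `(φ,ψ)` is a control-Lyapunov pair at `m̂` for the dynamics `f`, with threshold `ε₀`. -/
structure IsCLP {d : ℕ} {U : Type*} (f : Ed d → P2 d → U → Ed d) (mhat : P2 d)
    (φ : P2 d → ℝ) (ψ : P2 d → ℝ → ℝ) (ε₀ : ℝ) : Prop where
  phi_uc : UCmem mhat φ
  psi_pos : ∀ (m : P2 d) (ε : ℝ), 0 < ε → 0 < ψ m ε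
  psi_cont : ∀ (m : P2 d) (ε : ℝ), 0 < ε → ∀ η > (0 : ℝ), ∃ δ > (0 : ℝ),
    ∀ (m' : P2 d) (ε' : ℝ), 0 < ε' → W2 m m' < δ → |ε - ε'| < δ → |ψ m ε - ψ m' ε'| < η
  level_bdd : ∀ c : ℝ, ∃ K : ℝ, ∀ μ : P2 d, φ μ ≤ c → W2 mhat μ ≤ K
  psi_inf_pos : ∀ r R : ℝ, 0 < r → r < R → ∀ ε > (0 : ℝ), ∃ g > (0 : ℝ),
    ∀ m : P2 d, W2 mhat m ≤ R → ¬ W2 mhat m < r → g ≤ ψ m ε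
  psi_mono : ∀ (m : P2 d) (ε ε' : ℝ), 0 < ε → ε ≤ ε' → ψ m ε ≤ ψ m ε'
  eps0_pos : 0 < ε₀
  decrease : ∀ ε : ℝ, 0 < ε → ε < ε₀ → ∀ (m : P2 d) (α : Measure (Ed d × Ed d)),
    ProxSubgrad φ ε m α → ∃ u : U, ∫ z, ⟪z.2, f z.1 m u⟫_ℝ ∂α ≤ -ψ m ε

/-- A partition of `[0,∞)`. -/
def IsPartition (θ : ℕ → ℝ) : Prop :=
  θ 0 = 0 ∧ StrictMono θ ∧ Tendsto θ atTop atTop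

/-- The steps of the partition `θ` lie in `[δ₁, δ₂]` (i.e. `θ ∈ Θ(δ₁,δ₂)`). -/
def StepIn (θ : ℕ → ℝ) (δ₁ δ₂ : ℝ) : Prop :=
  ∀ i : ℕ, δ₁ ≤ θ (i + 1) - θ i ∧ θ (i + 1) - θ i ≤ δ₂

/-- `W₂`-continuity of a measure-valued curve on `[a,b]`. -/
def W2ContinuousOn {d : ℕ} (m : ℝ → P2 d) (a b : ℝ) : Prop :=
  ∀ t ∈ Icc a b, ∀ η > (0 : ℝ), ∃ δ > (0 : ℝ), ∀ s ∈ Icc a b, |s - t| < δ →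
    W2 (m s) (m t) < η

/-- `m` is a `W₂`-continuous distributional solution of the non-local continuity equation
`∂_t m_t + div(f(x,m_t,u) m_t) = 0` on `[a,b]` with constant control `u`. -/
def SolvesCE {d : ℕ} {U : Type*} (f : Ed d → P2 d → U → Ed d) (u : U)
    (m : ℝ → P2 d) (a b : ℝ) : Prop :=
  W2ContinuousOn m a b ∧
  ∀ χ : Ed d × ℝ → ℝ, ContDiff ℝ (⊤ : ℕ∞) χ → HasCompactSupport χ →
    tsupport χ ⊆ univ ×ˢ Ioo a b →
    ∫ t in a..b, ∫ x, (deriv (fun s : ℝ => χ (x, s)) t +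
      fderiv ℝ (fun y : Ed d => χ (y, t)) x (f x (m t) u)) ∂(m t).1 = 0

/-- A `θ`-trajectory of the controlled continuity equation under the feedback `k`,
starting from `m_*`. -/
def IsTraj {d : ℕ} {U : Type*} (f : Ed d → P2 d → U → Ed d) (k : P2 d → U)
    (θ : ℕ → ℝ) (mstar : P2 d) (m : ℝ → P2 d) : Prop :=
  m 0 = mstar ∧ ∀ i : ℕ, SolvesCE f (k (m (θ i))) m (θ i) (θ (i + 1))

/-- The extremal-shift value `∫ ((x−y)/κ²)·f(x,m,u) dπ(x,y)`. -/
def shiftVal {d : ℕ} {U : Type*} (f : Ed d → P2 d → U → Ed d) (κ : ℝ)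
    (π : Measure (Ed d × Ed d)) (m : P2 d) (u : U) : ℝ :=
  ∫ p, ⟪(κ ^ 2)⁻¹ • (p.1 - p.2), f p.1 m u⟫_ℝ ∂π

/-- `k` is an extremal-shift feedback associated with the plan selection `πsel`. -/
def IsExtremalShift {d : ℕ} {U : Type*} (f : Ed d → P2 d → U → Ed d) (κ : ℝ)
    (πsel : P2 d → Measure (Ed d × Ed d)) (k : P2 d → U) : Prop :=
  ∀ (m : P2 d) (u : U), shiftVal f κ (πsel m) m (k m) ≤ shiftVal f κ (πsel m) m u

/-- `C₂(R)` (computed with time-step bound `δ` and `s = ς₂(m̂)`). -/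
def C2const (C₁ δ s R : ℝ) : ℝ :=
  C₁ * Real.exp (C₁ * δ) * (1 + 2 * (C₁ * δ + s + R) * Real.exp (2 * C₁ * δ))

/-- `C₃(R)` (computed with time-step bound `δ` and `s = ς₂(m̂)`). -/
def C3const (C₀ C₁ δ s R : ℝ) : ℝ :=
  C₀ * (C₁ * Real.exp (C₁ * δ) * (1 + 2 * (C₁ * δ + s + R) * Real.exp (2 * C₁ * δ))
    + C2const C₁ δ s R)

/-- A feedback `k` is s-stabilizing at `m̂`. -/
def SStabilizing {d : ℕ} {U : Type*} (f : Ed d → P2 d → U → Ed d) (mhat : P2 d)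
    (k : P2 d → U) : Prop :=
  ∃ M : ℝ → ℝ, (∀ R > (0 : ℝ), 0 < M R) ∧
    Tendsto M (nhdsWithin 0 (Ioi 0)) (nhds 0) ∧
    ∀ r R : ℝ, 0 < r → r < R → ∃ δ > (0 : ℝ), ∃ T > (0 : ℝ),
      ∀ δhat : ℝ, 0 < δhat → δhat < δ →
      ∀ θ : ℕ → ℝ, IsPartition θ → StepIn θ δhat δ →
      ∀ mstar : P2 d, W2 mhat mstar ≤ R →
      ∀ m : ℝ → P2 d, IsTraj f k θ mstar m →
        (∀ t : ℝ, T ≤ t → W2 mhat (m t) ≤ r) ∧ (∀ t : ℝ, 0 ≤ t → W2 mhat (m t) ≤ M R)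


open scoped Convolution ContDiff in
lemma conv_lip_aux {d : ℕ} {F G H : Type*} [NormedAddCommGroup F] [NormedSpace ℝ F]
    [NormedAddCommGroup G] [NormedSpace ℝ G] [NormedAddCommGroup H] [NormedSpace ℝ H]
    (L : F →L[ℝ] G →L[ℝ] H) (f : Ed d → F) (hf : Continuous f) (hfc : HasCompactSupport f)
    (g : Ed d → G) (Λ : ℝ) (hg : Continuous g) (hgl : ∀ x y, ‖g x - g y‖ ≤ Λ * ‖x - y‖) (x y : Ed d) :
    ‖(f ⋆[L, volume] g) x - (f ⋆[L, volume] g) y‖ ≤ ‖L‖ * (∫ t, ‖f t‖) * Λ * ‖x - y‖ := by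
  have hIntg : ∀ z : Ed d, Integrable (fun t => L (f t) (g (z - t))) := by
    intro z
    apply Continuous.integrable_of_hasCompactSupport
    · fun_prop
    · apply HasCompactSupport.intro hfc
      intro t ht
      rw [image_eq_zero_of_notMem_tsupport ht]; simp
  unfold convolution
  rw [← integral_sub (hIntg x) (hIntg y)]
  have h1 : ∀ t, ‖L (f t) (g (x - t)) - L (f t) (g (y - t))‖ ≤ ‖L‖ * ‖f t‖ * (Λ * ‖x - y‖) := by
    intro t
    rw [← map_sub]
    refine (L.le_opNorm₂ _ _).trans ?_
    gcongr
    simpa using hgl (x - t) (y - t)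
  refine (norm_integral_le_of_norm_le (g := fun t => ‖L‖ * ‖f t‖ * (Λ * ‖x - y‖)) ?_ (.of_forall h1)).trans ?_
  · exact ((hf.norm.integrable_of_hasCompactSupport hfc.norm).const_mul _).mul_const _
  · rw [integral_mul_const, integral_const_mul]; apply le_of_eq; ring

open scoped Convolution ContDiff in
lemma mollify_aux (d : ℕ) (Λ ε : ℝ) (hΛ : 0 < Λ) (hε : 0 < ε) : ∃ K : ℝ, 0 ≤ K ∧
    ∀ w : Ed d → Ed d, (∀ x y, ‖w x - w y‖ ≤ Λ * ‖x - y‖) →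
    ∃ w' : Ed d → Ed d, ContDiff ℝ ∞ w' ∧ (∀ x, ‖w' x - w x‖ ≤ ε) ∧
      (∀ x y, ‖w' x - w' y‖ ≤ Λ * ‖x - y‖) ∧
      (∀ x y, ‖fderiv ℝ w' x - fderiv ℝ w' y‖ ≤ K * ‖x - y‖) := by
  have hr : 0 < ε / Λ := by positivity
  let ρ : ContDiffBump (0 : Ed d) := ⟨ε / Λ / 2, ε / Λ, by positivity, by linarith⟩
  let f : Ed d → ℝ := ρ.normed volume
  have hfs : ContDiff ℝ ∞ f := ρ.contDiff_normed
  have hfc : HasCompactSupport f := ρ.hasCompactSupport_normed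
  let L := ContinuousLinearMap.lsmul ℝ ℝ (E := Ed d)
  refine ⟨‖L.precompL (Ed d)‖ * (∫ t, ‖fderiv ℝ f t‖) * Λ, by positivity, ?_⟩
  intro w hw
  have hwc : Continuous w := by
    have : LipschitzWith ⟨Λ, hΛ.le⟩ w := LipschitzWith.of_dist_le_mul (by
      intro x y; rw [dist_eq_norm, dist_eq_norm]; exact hw x y)
    exact this.continuous
  refine ⟨f ⋆[L, volume] w, ?_, ?_, ?_, ?_⟩
  · exact hfc.contDiff_convolution_left _ hfs hwc.locallyIntegrable
  · intro x
    rw [← dist_eq_norm]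
    apply ContDiffBump.dist_normed_convolution_le hwc.aestronglyMeasurable
    intro y hy
    rw [dist_eq_norm]
    refine (hw y x).trans ?_
    have : ‖y - x‖ < ε / Λ := by simpa [dist_eq_norm] using hy
    calc Λ * ‖y - x‖ ≤ Λ * (ε / Λ) := by gcongr
      _ = ε := by field_simp
  · intro x y
    refine (conv_lip_aux L f hfs.continuous hfc w Λ hwc hw x y).trans ?_
    have h1 : ∫ t, ‖f t‖ = 1 := by
      have : ∀ t, ‖f t‖ = f t := fun t => Real.norm_of_nonneg (ρ.nonneg_normed t)
      simp only [this]
      exact ρ.integral_normed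
    have h2 : ‖L‖ ≤ 1 := ContinuousLinearMap.opNorm_lsmul_le
    rw [h1]
    gcongr
    nlinarith
  · intro x y
    have hd : ∀ x, fderiv ℝ (f ⋆[L, volume] w) x = (fderiv ℝ f ⋆[L.precompL (Ed d), volume] w) x :=
      fun x => (hfc.hasFDerivAt_convolution_left L (hfs.of_le (by simp)) hwc.locallyIntegrable x).fderiv
    rw [hd, hd]
    exact conv_lip_aux (L.precompL (Ed d)) _ (hfs.continuous_fderiv (by simp)) (hfc.fderiv ℝ) w Λ hwc hw x y


lemma cont_of_lip_aux {E F : Type*} [NormedAddCommGroup E] [NormedAddCommGroup F] {w : E → F} {Λ : ℝ}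
    (hΛ : 0 ≤ Λ) (hw : ∀ x y, ‖w x - w y‖ ≤ Λ * ‖x - y‖) : Continuous w := by
  have : LipschitzWith ⟨Λ, hΛ⟩ w := LipschitzWith.of_dist_le_mul (by
      intro x y; rw [dist_eq_norm, dist_eq_norm]; exact hw x y)
  exact this.continuous

open scoped ContDiff in
/-- Smooth compactly supported test functions with quantitative bounds. -/
structure TestFn {d : ℕ} (ψ : Ed d → ℝ) (A B : ℝ) : Prop where
  smooth : ContDiff ℝ ∞ ψ
  cpt : HasCompactSupport ψ
  bd : ∀ x, ‖fderiv ℝ ψ x‖ ≤ A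
  lip : ∀ x y, ‖fderiv ℝ ψ x - fderiv ℝ ψ y‖ ≤ B * ‖x - y‖
  B0 : 0 ≤ B

lemma TestFn.A0 {d : ℕ} {ψ : Ed d → ℝ} {A B : ℝ} (h : TestFn ψ A B) : 0 ≤ A :=
  (norm_nonneg _).trans (h.bd 0)

open scoped ContDiff in
lemma TestFn.exists {d : ℕ} {ψ : Ed d → ℝ} (h : ContDiff ℝ ∞ ψ) (hc : HasCompactSupport ψ) :
    ∃ A B, TestFn ψ A B := by
  obtain ⟨A, hA⟩ := (hc.fderiv ℝ).exists_bound_of_continuous (h.continuous_fderiv (by simp))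
  obtain ⟨B, hB⟩ := ContDiff.lipschitzWith_of_hasCompactSupport (hc.fderiv ℝ)
    (h.fderiv_right (m := ∞) (by simp)) (by simp)
  refine ⟨A, B, h, hc, hA, ?_, B.2⟩
  intro x y
  simpa [dist_eq_norm] using hB.dist_le_mul x y

open scoped ContDiff in
/-- Good (smooth) vector fields. -/
structure GoodField {d : ℕ} (w : Ed d → Ed d) (Λ K : ℝ) : Prop where
  smooth : ContDiff ℝ ∞ w
  lip : ∀ x y, ‖w x - w y‖ ≤ Λ * ‖x - y‖
  growth : ∀ x, ‖w x‖ ≤ Λ * (1 + ‖x‖)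
  dlip : ∀ x y, ‖fderiv ℝ w x - fderiv ℝ w y‖ ≤ K * ‖x - y‖
  L0 : 0 < Λ
  K0 : 0 ≤ K

open scoped ContDiff in
lemma TestFn.comp {d : ℕ} {ψ : Ed d → ℝ} {A B : ℝ} (h : TestFn ψ A B) {w : Ed d → Ed d} {Λ K : ℝ}
    (hw : GoodField w Λ K) {τ : ℝ} (hτ : 0 ≤ τ) (hτΛ : τ * Λ ≤ 1 / 2) :
    TestFn (fun x => ψ (x + τ • w x)) ((1 + τ * Λ) * A) ((1 + τ * Λ) ^ 2 * B + τ * K * A) := by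
  have hΛ := hw.L0
  have hA := h.A0
  have hB := h.B0
  have hK := hw.K0
  have hTs : ContDiff ℝ ∞ (fun x => x + τ • w x) := contDiff_id.add (hw.smooth.const_smul τ)
  have hψd : Differentiable ℝ ψ := h.smooth.differentiable (by simp)
  have hwd : Differentiable ℝ w := hw.smooth.differentiable (by simp)
  have hTd : ∀ x, HasFDerivAt (fun x => x + τ • w x)
      (ContinuousLinearMap.id ℝ (Ed d) + τ • fderiv ℝ w x) x := fun x =>
    (hasFDerivAt_id x).add ((hwd x).hasFDerivAt.const_smul τ)
  have hfd : ∀ x, fderiv ℝ (fun x => ψ (x + τ • w x)) x =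
      (fderiv ℝ ψ (x + τ • w x)).comp (ContinuousLinearMap.id ℝ (Ed d) + τ • fderiv ℝ w x) := by
    intro x
    exact (HasFDerivAt.comp x (hψd (x + τ • w x)).hasFDerivAt (hTd x)).fderiv
  have hwb : ∀ x, ‖fderiv ℝ w x‖ ≤ Λ := by
    intro x
    have hl : LipschitzWith ⟨Λ, hΛ.le⟩ w := LipschitzWith.of_dist_le_mul (by
      intro x y; rw [dist_eq_norm, dist_eq_norm]; exact hw.lip x y)
    exact norm_fderiv_le_of_lipschitz ℝ hl
  have hTb : ∀ x, ‖ContinuousLinearMap.id ℝ (Ed d) + τ • fderiv ℝ w x‖ ≤ 1 + τ * Λ := by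
    intro x
    refine (norm_add_le _ _).trans ?_
    refine add_le_add ContinuousLinearMap.norm_id_le ?_
    rw [norm_smul, Real.norm_of_nonneg hτ]
    gcongr
    exact hwb x
  have hTl : ∀ x y, ‖(x + τ • w x) - (y + τ • w y)‖ ≤ (1 + τ * Λ) * ‖x - y‖ := by
    intro x y
    have : (x + τ • w x) - (y + τ • w y) = (x - y) + τ • (w x - w y) := by
      rw [smul_sub]; abel
    rw [this]
    refine (norm_add_le _ _).trans ?_
    rw [norm_smul, Real.norm_of_nonneg hτ]
    have := mul_le_mul_of_nonneg_left (hw.lip x y) hτ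
    linarith
  refine ⟨h.smooth.comp hTs, ?_, ?_, ?_, by positivity⟩
  · obtain ⟨R, hR⟩ := h.cpt.isBounded.subset_closedBall (0 : Ed d)
    apply HasCompactSupport.intro (isCompact_closedBall (0 : Ed d) (2 * R + 1))
    intro x hx
    by_contra hne
    apply hx
    have h1 : x + τ • w x ∈ tsupport ψ := subset_tsupport _ hne
    have h2 := hR h1
    simp only [Metric.mem_closedBall, dist_zero_right] at h2 ⊢
    have h3 : ‖x‖ ≤ ‖x + τ • w x‖ + ‖τ • w x‖ := by
      have := norm_sub_le (x + τ • w x) (τ • w x)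
      simpa using this
    rw [norm_smul, Real.norm_of_nonneg hτ] at h3
    have h4 := mul_le_mul_of_nonneg_left (hw.growth x) hτ
    have h5 := mul_le_mul_of_nonneg_right hτΛ (by positivity : 0 ≤ 1 + ‖x‖)
    nlinarith
  · intro x
    rw [hfd]
    refine (ContinuousLinearMap.opNorm_comp_le _ _).trans ?_
    rw [mul_comm]
    gcongr
    · exact hTb x
    · exact h.bd _
  · intro x y
    rw [hfd, hfd]
    set Tx := x + τ • w x
    set Ty := y + τ • w y
    set P := ContinuousLinearMap.id ℝ (Ed d) + τ • fderiv ℝ w x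
    set P' := ContinuousLinearMap.id ℝ (Ed d) + τ • fderiv ℝ w y
    have e : (fderiv ℝ ψ Tx).comp P - (fderiv ℝ ψ Ty).comp P'
        = (fderiv ℝ ψ Tx - fderiv ℝ ψ Ty).comp P + (fderiv ℝ ψ Ty).comp (P - P') := by
      ext z; simp
    have e2 : P - P' = τ • (fderiv ℝ w x - fderiv ℝ w y) := by
      simp only [P, P', smul_sub]; abel
    rw [e]
    refine (norm_add_le _ _).trans ?_
    have b1 : ‖(fderiv ℝ ψ Tx - fderiv ℝ ψ Ty).comp P‖ ≤ (B * ((1 + τ * Λ) * ‖x - y‖)) * (1 + τ * Λ) := by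
      refine (ContinuousLinearMap.opNorm_comp_le _ _).trans ?_
      gcongr
      · exact (h.lip _ _).trans (by gcongr; exact hTl x y)
      · exact hTb x
    have b2 : ‖(fderiv ℝ ψ Ty).comp (P - P')‖ ≤ A * (τ * (K * ‖x - y‖)) := by
      refine (ContinuousLinearMap.opNorm_comp_le _ _).trans ?_
      rw [e2, norm_smul, Real.norm_of_nonneg hτ]
      gcongr
      · exact h.bd _
      · exact hw.dlip x y
    nlinarith

lemma TestFn.taylor {d : ℕ} {ψ : Ed d → ℝ} {A B : ℝ} (h : TestFn ψ A B) (x z : Ed d) :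
    |ψ (x + z) - ψ x - fderiv ℝ ψ x z| ≤ B * ‖z‖ ^ 2 := by
  have hB := h.B0
  have := Convex.norm_image_sub_le_of_norm_fderiv_le' (𝕜 := ℝ) (f := ψ) (s := Metric.closedBall x ‖z‖)
    (φ := fderiv ℝ ψ x) (C := B * ‖z‖) (x := x) (y := x + z)
    (fun y _ => h.smooth.differentiable (by simp) y) (fun y hy => ?_) (convex_closedBall _ _)
    (by simp) (by simp)
  · simp only [add_sub_cancel_left] at this
    rw [Real.norm_eq_abs] at this
    linarith [this, mul_assoc B ‖z‖ ‖z‖, sq ‖z‖, congrArg (B * ·) (sq ‖z‖)]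
  · refine (h.lip y x).trans ?_
    gcongr
    simpa [dist_eq_norm] using hy


/-- Closeness of the data at times `r` and `c`. -/
structure NearT {d : ℕ} (Λ S η : ℝ) (μ : ℝ → Measure (Ed d)) (v : ℝ → Ed d → Ed d) (c r : ℝ) : Prop where
  field : ∀ x, ‖v r x - v c x‖ ≤ Λ * η
  meas : ∀ (g : Ed d → ℝ) (L : ℝ), 0 ≤ L → Continuous g → HasCompactSupport g →
    (∀ x y, |g x - g y| ≤ L * (‖x - y‖ * (1 + ‖x‖))) →
    |∫ x, g x ∂(μ r) - ∫ x, g x ∂(μ c)| ≤ L * η * S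

/-- Linear continuity equation data. -/
structure LinProb {d : ℕ} (a b Λ S : ℝ) (μ : ℝ → Measure (Ed d)) (v : ℝ → Ed d → Ed d) : Prop where
  L0 : 0 < Λ
  S1 : 1 ≤ S
  prob : ∀ r, IsProbabilityMeasure (μ r)
  lip : ∀ r x y, ‖v r x - v r y‖ ≤ Λ * ‖x - y‖
  growth : ∀ r ∈ Icc a b, ∀ x, ‖v r x‖ ≤ Λ / 2 * (1 + ‖x‖)
  mom_int : ∀ r ∈ Icc a b, Integrable (fun x => (1 + ‖x‖) ^ 2) (μ r)
  mom : ∀ r ∈ Icc a b, ∫ x, (1 + ‖x‖) ^ 2 ∂(μ r) ≤ S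
  weak : ∀ ψ A B, TestFn ψ A B → ∀ s t, a ≤ s → s ≤ t → t ≤ b →
    IntervalIntegrable (fun r => ∫ x, fderiv ℝ ψ x (v r x) ∂(μ r)) volume s t ∧
    ∫ x, ψ x ∂(μ t) - ∫ x, ψ x ∂(μ s) = ∫ r in s..t, ∫ x, fderiv ℝ ψ x (v r x) ∂(μ r)
  near : ∀ η > (0 : ℝ), ∀ c ∈ Icc a b, ∃ δ > (0 : ℝ), ∀ r ∈ Icc a b, |r - c| < δ → NearT Λ S η μ v c r

lemma TestFn.hcs {d : ℕ} {ψ : Ed d → ℝ} {A B : ℝ} (h : TestFn ψ A B) (w : Ed d → Ed d) :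
    HasCompactSupport (fun x => fderiv ℝ ψ x (w x)) := by
  apply HasCompactSupport.intro (h.cpt.fderiv ℝ)
  intro x hx
  rw [image_eq_zero_of_notMem_tsupport hx]; simp

lemma TestFn.hcont {d : ℕ} {ψ : Ed d → ℝ} {A B : ℝ} (h : TestFn ψ A B) {w : Ed d → Ed d}
    (hw : Continuous w) : Continuous (fun x => fderiv ℝ ψ x (w x)) := by
  have := h.smooth.continuous_fderiv (by simp)
  fun_prop

lemma local_step {d : ℕ} {a b Λ S : ℝ} {μ : ℝ → Measure (Ed d)} {v : ℝ → Ed d → Ed d}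
    (P : LinProb a b Λ S μ v) {s t η ε c K : ℝ} (has : a ≤ s) (hst : s ≤ t) (htb : t ≤ b)
    (hη : 0 < η) (hstη : t - s ≤ η) (hε : 0 < ε) (hn : ∀ r ∈ Icc s t, NearT Λ S η μ v c r)
    {w : Ed d → Ed d} (hw : GoodField w Λ K) (hwv : ∀ x, ‖w x - v c x‖ ≤ ε)
    {ψ : Ed d → ℝ} {A B : ℝ} (h : TestFn ψ A B) :
    |∫ x, ψ x ∂(μ t) - ∫ x, ψ (x + (t - s) • w x) ∂(μ s)| ≤
      (t - s) * (A * ε + η * ((Λ + 2 * S * Λ + Λ ^ 2 * S) * (A + B))) := by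
  have hA := h.A0
  have hB := h.B0
  have hΛ := P.L0
  have hS := P.S1
  have hτ : 0 ≤ t - s := by linarith
  have := P.prob
  have hwc : Continuous w := hw.smooth.continuous
  have hvc : ∀ r, Continuous (v r) := fun r => cont_of_lip_aux hΛ.le (P.lip r)
  have hs : s ∈ Icc s t := ⟨le_rfl, hst⟩
  have hs' : s ∈ Icc a b := ⟨has, hst.trans htb⟩
  -- Lipschitz property of Dψ·w
  have hL : ∀ x y, |fderiv ℝ ψ x (w x) - fderiv ℝ ψ y (w y)| ≤
      (Λ * (A + B)) * (‖x - y‖ * (1 + ‖x‖)) := by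
    intro x y
    have e : fderiv ℝ ψ x (w x) - fderiv ℝ ψ y (w y) =
      (fderiv ℝ ψ x - fderiv ℝ ψ y) (w x) + fderiv ℝ ψ y (w x - w y) := by simp
    rw [e]
    have b1 : |(fderiv ℝ ψ x - fderiv ℝ ψ y) (w x)| ≤ (B * ‖x - y‖) * (Λ * (1 + ‖x‖)) := by
      rw [← Real.norm_eq_abs]
      refine (ContinuousLinearMap.le_opNorm _ _).trans ?_
      gcongr
      · exact h.lip x y
      · exact hw.growth x
    have b2 : |fderiv ℝ ψ y (w x - w y)| ≤ A * (Λ * ‖x - y‖) := by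
      rw [← Real.norm_eq_abs]
      refine (ContinuousLinearMap.le_opNorm _ _).trans ?_
      gcongr
      · exact h.bd y
      · exact hw.lip x y
    refine (abs_add_le _ _).trans ?_
    have : A * (Λ * ‖x - y‖) ≤ A * (Λ * ‖x - y‖) * (1 + ‖x‖) := by
      have : 0 ≤ A * (Λ * ‖x - y‖) := by positivity
      nlinarith [norm_nonneg x]
    nlinarith
  have hIw : ∀ r, Integrable (fun x => fderiv ℝ ψ x (w x)) (μ r) := fun r =>
    (h.hcont hwc).integrable_of_hasCompactSupport (h.hcs w)
  have hIv : ∀ r, Integrable (fun x => fderiv ℝ ψ x (v r x)) (μ r) := fun r =>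
    (h.hcont (hvc r)).integrable_of_hasCompactSupport (h.hcs _)
  have hr : ∀ r ∈ Icc s t, |∫ x, fderiv ℝ ψ x (v r x) ∂(μ r) - ∫ x, fderiv ℝ ψ x (w x) ∂(μ s)| ≤
      A * (Λ * η + ε) + 2 * (Λ * (A + B) * η * S) := by
    intro r hr
    have c1 : |∫ x, fderiv ℝ ψ x (v r x) ∂(μ r) - ∫ x, fderiv ℝ ψ x (w x) ∂(μ r)| ≤ A * (Λ * η + ε) := by
      rw [← integral_sub (hIv r) (hIw r)]
      have : ∀ x, ‖fderiv ℝ ψ x (v r x) - fderiv ℝ ψ x (w x)‖ ≤ A * (Λ * η + ε) := by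
        intro x
        rw [← map_sub]
        refine (ContinuousLinearMap.le_opNorm _ _).trans ?_
        gcongr
        · exact h.bd x
        · have e : v r x - w x = (v r x - v c x) - (w x - v c x) := by abel
          rw [e]
          exact (norm_sub_le _ _).trans (add_le_add ((hn r hr).field x) (hwv x))
      have := norm_integral_le_of_norm_le_const (μ := μ r) (.of_forall this)
      simpa using this
    have c2 := (hn r hr).meas _ _ (by positivity) (h.hcont hwc) (h.hcs w) hL
    have c3 := (hn s hs).meas _ _ (by positivity) (h.hcont hwc) (h.hcs w) hL
    rw [abs_le] at *
    constructor <;> linarith [c1.1, c1.2, c2.1, c2.2, c3.1, c3.2]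
  obtain ⟨hIntg, heq⟩ := P.weak ψ A B h s t has hst htb
  have d1 : |∫ x, ψ x ∂(μ t) - ∫ x, ψ x ∂(μ s) - (t - s) * ∫ x, fderiv ℝ ψ x (w x) ∂(μ s)| ≤
      (t - s) * (A * (Λ * η + ε) + 2 * (Λ * (A + B) * η * S)) := by
    have e : (t - s) * ∫ x, fderiv ℝ ψ x (w x) ∂(μ s) =
      ∫ r in s..t, ∫ x, fderiv ℝ ψ x (w x) ∂(μ s) := by simp
    rw [heq, e, ← intervalIntegral.integral_sub hIntg (by simp)]
    have := intervalIntegral.norm_integral_le_of_norm_le_const (a := s) (b := t)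
      (f := fun r => ∫ x, fderiv ℝ ψ x (v r x) ∂(μ r) - ∫ x, fderiv ℝ ψ x (w x) ∂(μ s))
      (C := A * (Λ * η + ε) + 2 * (Λ * (A + B) * η * S)) (by
        intro r hr'
        rw [uIoc_of_le hst] at hr'
        exact hr r ⟨hr'.1.le, hr'.2⟩)
    rw [abs_of_nonneg hτ] at this
    rw [mul_comm (t - s)]
    exact this
  have hIψ : Integrable ψ (μ s) := h.smooth.continuous.integrable_of_hasCompactSupport h.cpt
  have hIψT : Integrable (fun x => ψ (x + (t - s) • w x)) (μ s) := by
    obtain ⟨C, hC⟩ := h.cpt.exists_bound_of_continuous h.smooth.continuous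
    have hψc := h.smooth.continuous
    refine Integrable.of_bound (C := C) ?_ (.of_forall fun x => hC _)
    exact Continuous.aestronglyMeasurable (by fun_prop)
  have d2 : |∫ x, ψ (x + (t - s) • w x) ∂(μ s) - ∫ x, ψ x ∂(μ s) -
      (t - s) * ∫ x, fderiv ℝ ψ x (w x) ∂(μ s)| ≤ B * (t - s) ^ 2 * Λ ^ 2 * S := by
    rw [← integral_const_mul, ← integral_sub hIψT hIψ, ← integral_sub (f := fun x => ψ (x + (t - s) • w x) - ψ x) (hIψT.sub hIψ) ((hIw s).const_mul _)]
    have hb : ∀ x, ‖ψ (x + (t - s) • w x) - ψ x - (t - s) * fderiv ℝ ψ x (w x)‖ ≤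
        B * (t - s) ^ 2 * Λ ^ 2 * (1 + ‖x‖) ^ 2 := by
      intro x
      have := h.taylor x ((t - s) • w x)
      rw [map_smul, smul_eq_mul, norm_smul, Real.norm_of_nonneg hτ] at this
      rw [Real.norm_eq_abs]
      refine this.trans ?_
      calc B * ((t - s) * ‖w x‖) ^ 2 ≤ B * ((t - s) * (Λ * (1 + ‖x‖))) ^ 2 := by
            gcongr; exact hw.growth x
        _ = _ := by ring
    have := norm_integral_le_of_norm_le ((P.mom_int s hs').const_mul (B * (t - s) ^ 2 * Λ ^ 2)) (.of_forall hb)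
    rw [integral_const_mul] at this
    refine this.trans ?_
    have := P.mom s hs'
    gcongr
  have d3 : B * (t - s) ^ 2 * Λ ^ 2 * S ≤ (t - s) * (η * (B * Λ ^ 2 * S)) := by
    have : (t - s) * (t - s) ≤ (t - s) * η := by gcongr
    have h0 : 0 ≤ B * Λ ^ 2 * S := by positivity
    nlinarith
  have d4 : (t - s) * (A * (Λ * η + ε) + 2 * (Λ * (A + B) * η * S)) + (t - s) * (η * (B * Λ ^ 2 * S))
      ≤ (t - s) * (A * ε + η * ((Λ + 2 * S * Λ + Λ ^ 2 * S) * (A + B))) := by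
    have : 0 ≤ (t - s) * (η * (Λ * B + Λ ^ 2 * S * A)) := by positivity
    nlinarith
  rw [abs_le] at *
  constructor <;> linarith [d1.1, d1.2, d2.1, d2.2]


/-- Euler iteration. -/
def eulerMap {d : ℕ} (h : ℝ) (w : ℕ → Ed d → Ed d) : ℕ → Ed d → Ed d
  | 0 => id
  | n + 1 => fun x => eulerMap h w n x + h • w n (eulerMap h w n x)

set_option maxHeartbeats 1000000 in
lemma euler_meas {d : ℕ} {a b Λ S : ℝ} {μ : ℝ → Measure (Ed d)} {v : ℝ → Ed d → Ed d}
    (P : LinProb a b Λ S μ v) {h η ε K : ℝ} {N : ℕ} (hh : 0 < h) (hhη : h ≤ η) (hhΛ : h * Λ ≤ 1 / 2)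
    (hε : 0 < ε) (hN : a + N * h ≤ b)
    (w : ℕ → Ed d → Ed d) (c : ℕ → ℝ)
    (hw : ∀ n < N, GoodField (w n) Λ K) (hwv : ∀ n < N, ∀ x, ‖w n x - v (c n) x‖ ≤ ε)
    (hn : ∀ n < N, ∀ r ∈ Icc (a + n * h) (a + (n + 1 : ℕ) * h), NearT Λ S η μ v (c n) r) :
    ∀ n ≤ N, Continuous (eulerMap h w n) ∧ ∀ ψ A B, TestFn ψ A B →
      |∫ x, ψ x ∂(μ (a + n * h)) - ∫ x, ψ (eulerMap h w n x) ∂(μ a)| ≤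
        n * h * (A * Real.exp (n * h * Λ) * ε + η * ((Λ + 2 * S * Λ + Λ ^ 2 * S) * (A + B)) *
          Real.exp (n * h * (2 * Λ + K))) := by
  have hΛ := P.L0
  have hS := P.S1
  have hη : 0 < η := by linarith
  intro n
  induction n with
  | zero =>
    intro _
    refine ⟨continuous_id, ?_⟩
    intro ψ A B _
    simp [eulerMap]
  | succ n ih =>
    intro hnN
    have hn' : n < N := hnN
    obtain ⟨ihc, ih⟩ := ih hn'.le
    have hG := hw n hn'
    have hwc := hG.smooth.continuous
    refine ⟨?_, ?_⟩
    · change Continuous (fun x => eulerMap h w n x + h • w n (eulerMap h w n x))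
      fun_prop
    intro ψ A B hψ
    have hA := hψ.A0
    have hB := hψ.B0
    have hK := hG.K0
    have e1 : a + (n + 1 : ℕ) * h - (a + n * h) = h := by push_cast; ring
    have hle : a + (n + 1 : ℕ) * h ≤ b := by
      refine le_trans ?_ hN
      gcongr
    have h1 := local_step P (s := a + n * h) (t := a + (n + 1 : ℕ) * h) (η := η) (ε := ε) (c := c n)
      (by have : (0:ℝ) ≤ n * h := by positivity
          linarith) (by linarith) hle hη (by linarith) hε (hn n hn') hG (hwv n hn') hψ
    rw [e1] at h1
    have h2 := ih _ _ _ (hψ.comp hG hh.le hhΛ)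
    change |∫ x, ψ x ∂(μ (a + (n + 1 : ℕ) * h)) -
      ∫ x, ψ (eulerMap h w n x + h • w n (eulerMap h w n x)) ∂(μ a)| ≤ _
    set C := Λ + 2 * S * Λ + Λ ^ 2 * S with hC
    have hC0 : 0 ≤ C := by positivity
    set X := Real.exp (h * Λ) with hX
    set Y := Real.exp (h * (2 * Λ + K)) with hY
    set Xn := Real.exp (n * h * Λ) with hXn
    set Yn := Real.exp (n * h * (2 * Λ + K)) with hYn
    have eX : Real.exp ((n + 1 : ℕ) * h * Λ) = Xn * X := by
      rw [hXn, hX, ← Real.exp_add]; congr 1; push_cast; ring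
    have eY : Real.exp ((n + 1 : ℕ) * h * (2 * Λ + K)) = Yn * Y := by
      rw [hYn, hY, ← Real.exp_add]; congr 1; push_cast; ring
    rw [eX, eY]
    have hX1 : 1 + h * Λ ≤ X := by have := Real.add_one_le_exp (h * Λ); linarith
    have hY1 : (1 + h * Λ) ^ 2 + h * K ≤ Y := by
      have k1 : Y = X ^ 2 * Real.exp (h * K) := by
        rw [hY, hX, ← Real.exp_nat_mul, ← Real.exp_add]; congr 1; push_cast; ring
      have k2 : 1 + h * K ≤ Real.exp (h * K) := by have := Real.add_one_le_exp (h * K); linarith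
      have k3 : (1 + h * Λ) ^ 2 ≤ X ^ 2 := by gcongr
      have k4 : 1 ≤ X ^ 2 := by
        have : (1:ℝ) ≤ (1 + h * Λ) ^ 2 := by nlinarith [mul_pos hh hΛ]
        linarith
      have k5 : 0 ≤ h * K := by positivity
      rw [k1]
      nlinarith
    have hXn1 : 1 ≤ Xn := Real.one_le_exp (by positivity)
    have hYn1 : 1 ≤ Yn := Real.one_le_exp (by positivity)
    have hX1' : 1 ≤ X := Real.one_le_exp (by positivity)
    have hY1' : 1 ≤ Y := Real.one_le_exp (by positivity)
    have hAB : (1 + h * Λ) * A + ((1 + h * Λ) ^ 2 * B + h * K * A) ≤ Y * (A + B) := by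
      have q1 : 0 ≤ h * Λ := by positivity
      have q2 : 0 ≤ h * K := by positivity
      have : (1 + h * Λ) * A + ((1 + h * Λ) ^ 2 * B + h * K * A) ≤ ((1 + h * Λ) ^ 2 + h * K) * (A + B) := by
        have q3 : 0 ≤ (h * Λ + (h * Λ) ^ 2) * A + h * K * B := by positivity
        have q4 : ((1 + h * Λ) ^ 2 + h * K) * (A + B) - ((1 + h * Λ) * A + ((1 + h * Λ) ^ 2 * B + h * K * A))
          = (h * Λ + (h * Λ) ^ 2) * A + h * K * B := by ring
        linarith
      exact this.trans (by gcongr)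
    have h2' : |∫ x, ψ (x + h • w n x) ∂(μ (a + n * h)) -
        ∫ x, ψ (eulerMap h w n x + h • w n (eulerMap h w n x)) ∂(μ a)| ≤
        n * h * (A * (Xn * X) * ε + η * (C * (A + B)) * (Yn * Y)) := by
      refine h2.trans ?_
      have r1 : (1 + h * Λ) * A * Xn * ε ≤ A * (Xn * X) * ε := by
        calc (1 + h * Λ) * A * Xn * ε ≤ X * A * Xn * ε := by gcongr
          _ = _ := by ring
      have r2 : η * (C * ((1 + h * Λ) * A + ((1 + h * Λ) ^ 2 * B + h * K * A))) * Yn ≤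
          η * (C * (A + B)) * (Yn * Y) := by
        calc _ ≤ η * (C * (Y * (A + B))) * Yn := by gcongr
          _ = _ := by ring
      gcongr
    have h1' : A * ε + η * (C * (A + B)) ≤ A * (Xn * X) * ε + η * (C * (A + B)) * (Yn * Y) := by
      have u1 : 1 ≤ Xn * X := one_le_mul_of_one_le_of_one_le hXn1 hX1'
      have u2 : 1 ≤ Yn * Y := one_le_mul_of_one_le_of_one_le hYn1 hY1'
      have : A * ε ≤ A * ε * (Xn * X) := le_mul_of_one_le_right (by positivity) u1
      have : η * (C * (A + B)) ≤ η * (C * (A + B)) * (Yn * Y) := le_mul_of_one_le_right (by positivity) u2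
      nlinarith
    have h1'' := h1.trans (mul_le_mul_of_nonneg_left h1' hh.le)
    have := abs_sub_le (∫ x, ψ x ∂(μ (a + (n + 1 : ℕ) * h))) (∫ x, ψ (x + h • w n x) ∂(μ (a + n * h)))
      (∫ x, ψ (eulerMap h w n x + h • w n (eulerMap h w n x)) ∂(μ a))
    push_cast at *
    linarith

lemma euler_flow {d : ℕ} {a b Λ S : ℝ} {μ : ℝ → Measure (Ed d)} {v : ℝ → Ed d → Ed d}
    (P : LinProb a b Λ S μ v) {h η ε : ℝ} {N : ℕ} (hh : 0 < h) (hη : 0 < η)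
    (hε : 0 < ε) (hN : a + N * h ≤ b)
    (w : ℕ → Ed d → Ed d) (c : ℕ → ℝ)
    (hwv : ∀ n < N, ∀ x, ‖w n x - v (c n) x‖ ≤ ε)
    (hn : ∀ n < N, ∀ r ∈ Icc (a + n * h) (a + (n + 1 : ℕ) * h), NearT Λ S η μ v (c n) r)
    (α : ℝ → Ed d) (V : ℝ) (hα : ∀ r ∈ Icc a b, HasDerivWithinAt α (v r (α r)) (Icc a b) r)
    (hV0 : 0 ≤ V) (hV : ∀ r ∈ Icc a b, ‖v r (α r)‖ ≤ V) :
    ∀ n ≤ N, ‖eulerMap h w n (α a) - α (a + n * h)‖ ≤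
      n * h * Real.exp (n * h * Λ) * (Λ * η + ε + Λ * (h * V)) := by
  have hΛ := P.L0
  intro n
  induction n with
  | zero => intro _; simp [eulerMap]
  | succ n ih =>
    intro hnN
    have hn' : n < N := hnN
    have ih := ih hn'.le
    have hle : a + (n + 1 : ℕ) * h ≤ b := by
      refine le_trans ?_ hN
      gcongr
    have e1 : a + (n + 1 : ℕ) * h - (a + n * h) = h := by push_cast; ring
    have has : a ≤ a + n * h := by
      have : (0:ℝ) ≤ n * h := by positivity
      linarith
    set s := a + n * h with hs
    set t := a + (n + 1 : ℕ) * h with ht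
    set xn := eulerMap h w n (α a) with hxn
    change ‖xn + h • w n xn - α t‖ ≤ _
    have hsub : Icc s t ⊆ Icc a b := Icc_subset_Icc has hle
    have hd : ∀ r ∈ Icc s t, HasDerivWithinAt α (v r (α r)) (Icc s t) r := fun r hr =>
      (hα r (hsub hr)).mono hsub
    have hinc : ∀ r ∈ Icc s t, ‖α r - α s‖ ≤ h * V := by
      intro r hr
      have := norm_image_sub_le_of_norm_deriv_le_segment' hd
        (fun r hr => hV r (hsub ⟨hr.1, hr.2.le⟩)) r hr
      refine this.trans ?_
      rw [mul_comm]
      gcongr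
      linarith [hr.2]
    have hd2 : ∀ r ∈ Icc s t, HasDerivWithinAt (fun r => α r - (r - s) • w n xn)
        (v r (α r) - w n xn) (Icc s t) r := by
      intro r hr
      have := ((hasDerivWithinAt_id r (Icc s t)).sub_const s).smul_const (w n xn)
      have := (hd r hr).sub this
      rw [one_smul] at this
      exact this
    have hb : ∀ r ∈ Ico s t, ‖v r (α r) - w n xn‖ ≤ Λ * η + ε + Λ * (h * V) + Λ * ‖xn - α s‖ := by
      intro r hr
      have hr' : r ∈ Icc s t := ⟨hr.1, hr.2.le⟩
      have e : v r (α r) - w n xn = (v r (α r) - v (c n) (α r)) + (v (c n) (α r) - v (c n) xn)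
        - (w n xn - v (c n) xn) := by abel
      rw [e]
      have e' : α r - xn = (α r - α s) - (xn - α s) := by abel
      have k1 := (hn n hn' r hr').field (α r)
      have k2 := P.lip (c n) (α r) xn
      have k3 := hwv n hn' xn
      have k4 : ‖α r - xn‖ ≤ h * V + ‖xn - α s‖ := by
        rw [e']; exact (norm_sub_le _ _).trans (by gcongr; exact hinc r hr')
      have k5 := mul_le_mul_of_nonneg_left k4 hΛ.le
      have k6 := norm_sub_le ((v r (α r) - v (c n) (α r)) + (v (c n) (α r) - v (c n) xn)) (w n xn - v (c n) xn)
      have k7 := norm_add_le (v r (α r) - v (c n) (α r)) (v (c n) (α r) - v (c n) xn)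
      linarith
    have hst : s ≤ t := by linarith
    have key := norm_image_sub_le_of_norm_deriv_le_segment' hd2 hb t ⟨hst, le_rfl⟩
    simp only [e1, sub_self, zero_smul, sub_zero] at key
    have e : xn + h • w n xn - α t = (xn - α s) - (α t - h • w n xn - α s) := by abel
    rw [e]
    refine (norm_sub_le _ _).trans ?_
    set D := Λ * η + ε + Λ * (h * V) with hD
    have hD0 : 0 ≤ D := by positivity
    set X := Real.exp (h * Λ) with hX
    set Xn := Real.exp (n * h * Λ) with hXn
    have eX : Real.exp ((n + 1 : ℕ) * h * Λ) = Xn * X := by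
      rw [hXn, hX, ← Real.exp_add]; congr 1; push_cast; ring
    rw [eX]
    have hX1 : 1 + h * Λ ≤ X := by have := Real.add_one_le_exp (h * Λ); linarith
    have hXn1 : 1 ≤ Xn := Real.one_le_exp (by positivity)
    have hX1' : 1 ≤ X := Real.one_le_exp (by positivity)
    have u1 : 1 ≤ Xn * X := one_le_mul_of_one_le_of_one_le hXn1 hX1'
    have m1 : (1 + h * Λ) * ‖xn - α s‖ ≤ X * (n * h * Xn * D) := by gcongr
    have m2 : h * D ≤ h * D * (Xn * X) := le_mul_of_one_le_right (by positivity) u1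
    push_cast
    nlinarith

lemma euler_exists {d : ℕ} {a b Λ S : ℝ} {μ : ℝ → Measure (Ed d)} {v : ℝ → Ed d → Ed d}
    (hab : a < b) (P : LinProb a b Λ S μ v) : ∃ C : ℝ, 0 ≤ C ∧ ∀ ε : ℝ, 0 < ε → ε ≤ Λ / 2 →
    ∃ Φ : Ed d → Ed d, Continuous Φ ∧
      (∀ ψ A B, TestFn ψ A B → |∫ x, ψ x ∂(μ b) - ∫ x, ψ (Φ x) ∂(μ a)| ≤ ε * C * (A + B)) ∧
      (∀ (α : ℝ → Ed d) (V : ℝ), (∀ r ∈ Icc a b, HasDerivWithinAt α (v r (α r)) (Icc a b) r) →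
        0 ≤ V → (∀ r ∈ Icc a b, ‖v r (α r)‖ ≤ V) → ‖Φ (α a) - α b‖ ≤ ε * C * (1 + V)) := by
  have hΛ := P.L0
  have hS := P.S1
  set T := b - a with hT
  have hT0 : 0 < T := by linarith
  set C1 := Λ + 2 * S * Λ + Λ ^ 2 * S with hC1
  have hC10 : 0 ≤ C1 := by positivity
  refine ⟨T * (Real.exp (T * Λ) + C1) + T * Real.exp (T * Λ) * (Λ + 1), by positivity, ?_⟩
  intro ε hε hεΛ
  obtain ⟨K, hK, hmol⟩ := mollify_aux d Λ ε hΛ hε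
  set η := ε * Real.exp (-(T * (2 * Λ + K))) with hηd
  have hη : 0 < η := by positivity
  have hηε : η ≤ ε := by
    have : Real.exp (-(T * (2 * Λ + K))) ≤ 1 := Real.exp_le_one_iff.2 (by
      have : 0 ≤ T * (2 * Λ + K) := by positivity
      linarith)
    exact mul_le_of_le_one_right hε.le this
  choose! δ hδ0 hδ using P.near η hη
  obtain ⟨l, hl, hleb⟩ := lebesgue_number_lemma_of_metric (isCompact_Icc (a := a) (b := b))
    (c := fun c : Icc a b => Metric.ball (c : ℝ) (δ c)) (fun _ => Metric.isOpen_ball) (by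
      intro x hx
      exact mem_iUnion.2 ⟨⟨x, hx⟩, Metric.mem_ball_self (hδ0 x hx)⟩)
  obtain ⟨N, hNlt⟩ := exists_nat_gt (T / min l (min η (1 / (2 * Λ))))
  have hmin : 0 < min l (min η (1 / (2 * Λ))) := by positivity
  have hNpos : (0 : ℝ) < N := lt_trans (by positivity) hNlt
  set h := T / N with hh
  have hh0 : 0 < h := by positivity
  have hhm : h < min l (min η (1 / (2 * Λ))) := by
    rw [hh, div_lt_iff₀ hNpos]
    rw [div_lt_iff₀ hmin] at hNlt
    linarith
  have hNh : N * h = T := by rw [hh]; field_simp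
  have hhl : h < l := lt_of_lt_of_le hhm (min_le_left _ _)
  have hhη : h ≤ η := (lt_of_lt_of_le hhm ((min_le_right _ _).trans (min_le_left _ _))).le
  have hhΛ : h * Λ ≤ 1 / 2 := by
    have : h ≤ 1 / (2 * Λ) := (lt_of_lt_of_le hhm ((min_le_right _ _).trans (min_le_right _ _))).le
    calc h * Λ ≤ 1 / (2 * Λ) * Λ := by gcongr
      _ = 1 / 2 := by field_simp
  have hex : ∀ n : ℕ, ∃ w : Ed d → Ed d, ∃ c : ℝ, n < N → GoodField w Λ K ∧ (∀ x, ‖w x - v c x‖ ≤ ε) ∧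
      ∀ r ∈ Icc (a + n * h) (a + (n + 1 : ℕ) * h), NearT Λ S η μ v c r := by
    intro n
    by_cases hn : n < N
    · have hle : a + (n + 1 : ℕ) * h ≤ b := by
        have : ((n + 1 : ℕ) : ℝ) * h ≤ N * h := by gcongr; exact hn
        linarith
      have has : a ≤ a + n * h := by
        have : (0:ℝ) ≤ n * h := by positivity
        linarith
      have hsx : a + n * h ≤ a + (n + 1 : ℕ) * h := by gcongr; simp
      obtain ⟨c, hc⟩ := hleb (a + n * h) ⟨has, hsx.trans hle⟩
      obtain ⟨w, hw1, hw2, hw3, hw4⟩ := hmol (v c) (P.lip c)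
      refine ⟨w, c, fun _ => ⟨⟨hw1, hw3, ?_, hw4, hΛ, hK⟩, hw2, ?_⟩⟩
      · intro x
        have k1 := P.growth c c.2 x
        have k2 := hw2 x
        have k3 : ‖w x‖ ≤ ‖w x - v c x‖ + ‖v c x‖ := by
          simpa using norm_add_le (w x - v c x) (v c x)
        nlinarith [norm_nonneg x]
      · intro r hr
        apply hδ c c.2 r ⟨has.trans hr.1, hr.2.trans hle⟩
        have : r ∈ Metric.ball (a + n * h) l := by
          rw [Metric.mem_ball, Real.dist_eq, abs_lt]
          have := hr.1; have h2 := hr.2; push_cast at h2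
          constructor <;> linarith
        simpa [Real.dist_eq] using hc this
    · exact ⟨0, 0, fun h => absurd h hn⟩
  choose w c hwc using hex
  have hNb : a + N * h = b := by rw [hNh]; ring
  have hm := euler_meas P (N := N) hh0 hhη hhΛ hε hNb.le w c (fun n hn => (hwc n hn).1)
    (fun n hn => (hwc n hn).2.1) (fun n hn => (hwc n hn).2.2) N le_rfl
  refine ⟨eulerMap h w N, hm.1, ?_, ?_⟩
  · intro ψ A B hψ
    have hA := hψ.A0
    have hB := hψ.B0
    have := hm.2 ψ A B hψ
    rw [hNb, hNh] at this
    refine this.trans ?_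
    have e : η * (C1 * (A + B)) * Real.exp (T * (2 * Λ + K)) = ε * (C1 * (A + B)) := by
      have : Real.exp (-(T * (2 * Λ + K))) * Real.exp (T * (2 * Λ + K)) = 1 := by
        rw [← Real.exp_add]; simp
      rw [hηd]
      linear_combination (ε * (C1 * (A + B))) * this
    rw [e]
    set X := Real.exp (T * Λ)
    have hX : 0 ≤ X := (Real.exp_pos _).le
    have p1 : 0 ≤ ε * (T * X * (Λ + 1)) * (A + B) := by positivity
    have p2 : 0 ≤ T * ε * X * B := by positivity
    nlinarith
  · intro α V hα hV0 hV
    have := euler_flow P (N := N) hh0 hη hε hNb.le w c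
      (fun n hn => (hwc n hn).2.1) (fun n hn => (hwc n hn).2.2) α V hα hV0 hV N le_rfl
    rw [hNb, hNh] at this
    refine this.trans ?_
    set X := Real.exp (T * Λ)
    have hX : 0 ≤ X := (Real.exp_pos _).le
    have q : Λ * η + ε + Λ * (h * V) ≤ ε * ((Λ + 1) * (1 + V)) := by
      have q1 : Λ * η ≤ Λ * ε := by gcongr
      have q2 : Λ * (h * V) ≤ Λ * (ε * V) := by gcongr; exact hhη.trans hηε
      nlinarith [mul_nonneg hε.le hV0]
    have p1 : 0 ≤ ε * (T * (X + C1)) * (1 + V) := by positivity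
    calc T * X * (Λ * η + ε + Λ * (h * V)) ≤ T * X * (ε * ((Λ + 1) * (1 + V))) := by gcongr
      _ ≤ _ := by nlinarith


open scoped ContDiff in
lemma meas_ext_smooth {d : ℕ} (μ ν : Measure (Ed d)) [IsFiniteMeasure μ] [IsFiniteMeasure ν]
    (h : ∀ ψ : Ed d → ℝ, ContDiff ℝ ∞ ψ → HasCompactSupport ψ → ∫ x, ψ x ∂μ = ∫ x, ψ x ∂ν) :
    μ = ν := by
  have h1 : μ ≪ μ + ν := Measure.absolutelyContinuous_of_le (Measure.le_add_right le_rfl)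
  have h2 : ν ≪ μ + ν := Measure.absolutelyContinuous_of_le (Measure.le_add_left le_rfl)
  have lb1 : μ.HaveLebesgueDecomposition (μ + ν) := Measure.haveLebesgueDecomposition_of_sigmaFinite _ _
  have lb2 : ν.HaveLebesgueDecomposition (μ + ν) := Measure.haveLebesgueDecomposition_of_sigmaFinite _ _
  have i1 : Integrable (fun x => (μ.rnDeriv (μ + ν) x).toReal) (μ + ν) := Measure.integrable_toReal_rnDeriv
  have i2 : Integrable (fun x => (ν.rnDeriv (μ + ν) x).toReal) (μ + ν) := Measure.integrable_toReal_rnDeriv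
  have key := ae_eq_zero_of_integral_contDiff_smul_eq_zero (μ := μ + ν)
    (f := fun x => (μ.rnDeriv (μ + ν) x).toReal - (ν.rnDeriv (μ + ν) x).toReal)
    (i1.sub i2).locallyIntegrable (by
      intro g hg hgc
      have e1 := integral_rnDeriv_smul (f := g) h1
      have e2 := integral_rnDeriv_smul (f := g) h2
      have b := hgc.exists_bound_of_continuous hg.continuous
      obtain ⟨C, hC⟩ := b
      have j1 : Integrable (fun x => (μ.rnDeriv (μ + ν) x).toReal * g x) (μ + ν) :=
        i1.mul_bdd hg.continuous.aestronglyMeasurable (Eventually.of_forall hC)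
      have j2 : Integrable (fun x => (ν.rnDeriv (μ + ν) x).toReal * g x) (μ + ν) :=
        i2.mul_bdd hg.continuous.aestronglyMeasurable (Eventually.of_forall hC)
      simp only [smul_eq_mul] at e1 e2 ⊢
      have : ∀ x, g x * ((μ.rnDeriv (μ + ν) x).toReal - (ν.rnDeriv (μ + ν) x).toReal) =
        (μ.rnDeriv (μ + ν) x).toReal * g x - (ν.rnDeriv (μ + ν) x).toReal * g x := fun x => by ring
      simp_rw [this]
      rw [integral_sub j1 j2, e1, e2, h g hg hgc, sub_self])
  refine (Measure.withDensity_rnDeriv_eq μ (μ + ν) h1).symm.trans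
    (Eq.trans ?_ (Measure.withDensity_rnDeriv_eq ν (μ + ν) h2))
  apply withDensity_congr_ae
  filter_upwards [key, Measure.rnDeriv_lt_top μ (μ + ν), Measure.rnDeriv_lt_top ν (μ + ν)] with x hx l1 l2
  exact (ENNReal.toReal_eq_toReal_iff' l1.ne l2.ne).1 (by linarith)

lemma flow_exists {d : ℕ} {a b Λ S : ℝ} {μ : ℝ → Measure (Ed d)} {v : ℝ → Ed d → Ed d}
    (hab : a < b) (P : LinProb a b Λ S μ v) {C₁ g : ℝ} (hC₁ : 0 < C₁) (hg0 : 0 ≤ g)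
    (hg : ∀ r ∈ Icc a b, ∀ x, ‖v r x‖ ≤ C₁ * (1 + ‖x‖ + g)) (hβ : C₁ * (b - a) < 1) (x : Ed d) :
    ∃ α : ℝ → Ed d, α a = x ∧ (∀ r ∈ Icc a b, HasDerivWithinAt α (v r (α r)) (Icc a b) r) ∧
      ∀ r ∈ Icc a b, ‖α r - x‖ ≤ C₁ * (b - a) * (1 + g + ‖x‖) / (1 - C₁ * (b - a)) := by
  have hΛ := P.L0
  set β := C₁ * (b - a) with hβd
  have hβ0 : 0 ≤ β := by have : 0 ≤ b - a := by linarith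
                         positivity
  have h1β : 0 < 1 - β := by linarith
  set ρ := β * (1 + g + ‖x‖) / (1 - β) with hρ
  have hρ0 : 0 ≤ ρ := by positivity
  have hρe : ρ * (1 - β) = β * (1 + g + ‖x‖) := by rw [hρ]; field_simp
  set L := C₁ * (1 + (‖x‖ + ρ) + g) with hL
  have hL0 : 0 ≤ L := by positivity
  have hPL : IsPicardLindelof v (⟨a, left_mem_Icc.2 hab.le⟩ : Icc a b) x ⟨ρ, hρ0⟩ 0 ⟨L, hL0⟩ ⟨Λ, hΛ.le⟩ := by
    refine ⟨?_, ?_, ?_, ?_⟩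
    · intro t _
      apply LipschitzWith.lipschitzOnWith
      exact LipschitzWith.of_dist_le_mul (by
        intro x y; rw [dist_eq_norm, dist_eq_norm]; exact P.lip t x y)
    · intro y _
      rw [Metric.continuousOn_iff]
      intro c hc ε hε
      obtain ⟨δ, hδ, h⟩ := P.near (ε / (2 * Λ)) (by positivity) c hc
      refine ⟨δ, hδ, fun r hr hrc => ?_⟩
      have := (h r hr (by simpa [Real.dist_eq] using hrc)).field y
      rw [dist_eq_norm]
      have e : Λ * (ε / (2 * Λ)) = ε / 2 := by field_simp
      linarith
    · intro t ht y hy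
      refine (hg t ht y).trans ?_
      have hy' : ‖y‖ ≤ ‖x‖ + ρ := by
        have : ‖y - x‖ ≤ ρ := by
          rw [Metric.mem_closedBall, dist_eq_norm] at hy; exact hy
        have := norm_le_norm_add_norm_sub' y x
        linarith
      show _ ≤ L
      rw [hL]; gcongr
    · have : max (b - a) (a - a) = b - a := by rw [sub_self]; exact max_eq_left (by linarith)
      show L * max (b - a) (a - a) ≤ ρ - 0
      rw [this, hL]
      have : C₁ * (1 + (‖x‖ + ρ) + g) * (b - a) = β * (1 + g + ‖x‖) + β * ρ := by rw [hβd]; ring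
      linarith
  obtain ⟨α, hα0, hα⟩ := hPL.exists_eq_forall_mem_Icc_hasDerivWithinAt₀
  refine ⟨α, hα0, hα, ?_⟩
  have hαa : α a = x := hα0
  have hcont : ContinuousOn (fun r => ‖α r - x‖) (Icc a b) := by
    have : ContinuousOn α (Icc a b) := fun r hr => (hα r hr).continuousWithinAt
    fun_prop
  obtain ⟨r₀, hr₀, hmax⟩ := isCompact_Icc.exists_isMaxOn ⟨a, left_mem_Icc.2 hab.le⟩ hcont
  have hM : ∀ r ∈ Icc a b, ‖α r - x‖ ≤ ‖α r₀ - x‖ := fun r hr => hmax hr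
  set M := ‖α r₀ - x‖ with hMd
  have hM0 : 0 ≤ M := norm_nonneg _
  have := norm_image_sub_le_of_norm_deriv_le_segment' hα (C := C₁ * (1 + (‖x‖ + M) + g)) (by
    intro r hr
    refine (hg r (Ico_subset_Icc_self hr) _).trans ?_
    have := hM r (Ico_subset_Icc_self hr)
    have := norm_le_norm_add_norm_sub' (α r) x
    gcongr; linarith) r₀ hr₀
  rw [hαa, ← hMd] at this
  have h2 : C₁ * (1 + (‖x‖ + M) + g) * (r₀ - a) ≤ C₁ * (1 + (‖x‖ + M) + g) * (b - a) := by
    gcongr; exact hr₀.2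
  have h3 : C₁ * (1 + (‖x‖ + M) + g) * (b - a) = β * (1 + g + ‖x‖) + β * M := by rw [hβd]; ring
  have hMρ : M ≤ ρ := by
    rw [hρ, le_div_iff₀ h1β]; linarith
  exact fun r hr => (hM r hr).trans hMρ

lemma push_exists {d : ℕ} {a b Λ S : ℝ} {μ : ℝ → Measure (Ed d)} {v : ℝ → Ed d → Ed d}
    (hab : a < b) (P : LinProb a b Λ S μ v) {C₁ g : ℝ} (hC₁ : 0 < C₁) (hg0 : 0 ≤ g)
    (hg : ∀ r ∈ Icc a b, ∀ x, ‖v r x‖ ≤ C₁ * (1 + ‖x‖ + g)) (hβ : C₁ * (b - a) < 1) :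
    ∃ X : Ed d → Ed d, Measurable X ∧ μ b = (μ a).map X ∧
      ∀ x, ‖X x - x‖ ≤ C₁ * (b - a) * (1 + g + ‖x‖) / (1 - C₁ * (b - a)) := by
  have hΛ := P.L0
  have hprob := P.prob
  choose α hα0 hα hαb using flow_exists hab P hC₁ hg0 hg hβ
  have hbm : b ∈ Icc a b := right_mem_Icc.2 hab.le
  obtain ⟨C, hC0, hC⟩ := euler_exists hab P
  set ε : ℕ → ℝ := fun n => Λ / 2 * (1 / ((n : ℝ) + 1)) with hεd
  have hε0 : ∀ n, 0 < ε n := fun n => by simp only [hεd]; positivity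
  have hε1 : ∀ n, ε n ≤ Λ / 2 := fun n => by
    simp only [hεd]
    refine mul_le_of_le_one_right (by positivity) ?_
    rw [div_le_one (by positivity)]
    have : (0:ℝ) ≤ n := Nat.cast_nonneg n
    linarith
  have hεt : Tendsto ε atTop (𝓝 0) := by
    have := (tendsto_one_div_add_atTop_nhds_zero_nat (𝕜 := ℝ)).const_mul (Λ / 2)
    simpa [hεd] using this
  choose Φ hΦc hΦm hΦf using fun n => hC (ε n) (hε0 n) (hε1 n)
  have hlim : ∀ x, Tendsto (fun n => Φ n x) atTop (𝓝 (α x b)) := by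
    intro x
    have hac : ContinuousOn (fun r => ‖α x r‖) (Icc a b) := by
      have : ContinuousOn (α x) (Icc a b) := fun r hr => (hα x r hr).continuousWithinAt
      fun_prop
    obtain ⟨M, hM⟩ := isCompact_Icc.exists_bound_of_continuousOn hac
    have hM0 : 0 ≤ M := (norm_nonneg _).trans (hM b hbm)
    have hV : ∀ r ∈ Icc a b, ‖v r (α x r)‖ ≤ C₁ * (1 + M + g) := fun r hr => by
      refine (hg r hr _).trans ?_
      have := hM r hr
      rw [norm_norm] at this
      gcongr
    rw [tendsto_iff_norm_sub_tendsto_zero]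
    have hz : Tendsto (fun n => ε n * C * (1 + C₁ * (1 + M + g))) atTop (𝓝 0) := by
      have := (hεt.mul_const C).mul_const (1 + C₁ * (1 + M + g))
      simpa using this
    refine squeeze_zero (fun n => norm_nonneg _) (fun n => ?_) hz
    have := hΦf n (α x) _ (hα x) (by positivity) hV
    rwa [hα0 x] at this
  have hXm : Measurable (fun x => α x b) :=
    measurable_of_tendsto_metrizable (fun n => (hΦc n).measurable) (tendsto_pi_nhds.2 hlim)
  refine ⟨fun x => α x b, hXm, ?_, fun x => hαb x b hbm⟩
  have : IsProbabilityMeasure ((μ a).map fun x => α x b) := Measure.isProbabilityMeasure_map hXm.aemeasurable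
  apply meas_ext_smooth
  intro ψ hψ hψc
  obtain ⟨A, B, hT⟩ := TestFn.exists hψ hψc
  rw [integral_map hXm.aemeasurable hψ.continuous.aestronglyMeasurable]
  obtain ⟨K, hK⟩ := hψc.exists_bound_of_continuous hψ.continuous
  have t1 : Tendsto (fun n => ∫ x, ψ (Φ n x) ∂(μ a)) atTop (𝓝 (∫ x, ψ (α x b) ∂(μ a))) := by
    refine tendsto_integral_of_dominated_convergence (fun _ => K) ?_ (integrable_const _) ?_ ?_
    · exact fun n => (hψ.continuous.comp (hΦc n)).aestronglyMeasurable
    · exact fun n => Eventually.of_forall fun x => hK _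
    · exact Eventually.of_forall fun x => (hψ.continuous.tendsto _).comp (hlim x)
  have t2 : Tendsto (fun n => ∫ x, ψ (Φ n x) ∂(μ a)) atTop (𝓝 (∫ x, ψ x ∂(μ b))) := by
    rw [tendsto_iff_norm_sub_tendsto_zero]
    have hz : Tendsto (fun n => ε n * C * (A + B)) atTop (𝓝 0) := by
      have := (hεt.mul_const C).mul_const (A + B)
      simpa using this
    refine squeeze_zero (fun n => norm_nonneg _) (fun n => ?_) hz
    rw [norm_sub_rev]
    exact hΦm n ψ A B hT
  exact tendsto_nhds_unique t2 t1


lemma eLpNorm_two_sq {α : Type*} {d : ℕ} [MeasurableSpace α] (π : Measure α) (h : α → Ed d) :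
    ∫⁻ p, (‖h p‖₊ : ℝ≥0∞) ^ 2 ∂π = eLpNorm h 2 π ^ 2 := by
  have := eLpNorm_nnreal_pow_eq_lintegral (f := h) (μ := π) (p := 2) (by simp)
  simp only [NNReal.coe_ofNat, ENNReal.coe_ofNat] at this
  rw [show eLpNorm h 2 π ^ 2 = eLpNorm h 2 π ^ (2 : ℝ) by norm_cast, this]
  apply lintegral_congr; intro p
  rw [enorm_eq_nnnorm]; norm_cast

lemma P2.memLp {d : ℕ} (μ : P2 d) : MemLp (fun x : Ed d => x) 2 μ.1 := by
  refine ⟨by fun_prop, ?_⟩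
  have h := μ.2.2
  rw [eLpNorm_two_sq μ.1 (fun x => x)] at h
  by_contra hc
  rw [not_lt_top_iff.1 hc] at h
  simp at h

lemma P2.prob {d : ℕ} (μ : P2 d) : IsProbabilityMeasure μ.1 := μ.2.1

lemma vs_eq {d : ℕ} (μ : P2 d) : varsigma2 μ = (eLpNorm (fun x : Ed d => x) 2 μ.1).toReal := by
  unfold varsigma2
  rw [eLpNorm_two_sq μ.1 (fun x => x), ENNReal.toReal_pow, Real.sqrt_sq ENNReal.toReal_nonneg]

lemma vs_nonneg {d : ℕ} (μ : P2 d) : 0 ≤ varsigma2 μ := Real.sqrt_nonneg _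
lemma W2_nonneg {d : ℕ} (μ ν : P2 d) : 0 ≤ W2 μ ν := Real.sqrt_nonneg _

/-- length of a plan -/
def plen {d : ℕ} (π : Measure (Ed d × Ed d)) : ℝ≥0∞ := eLpNorm (fun p : Ed d × Ed d => p.1 - p.2) 2 π

lemma wcost_eq {d : ℕ} (π : Measure (Ed d × Ed d)) : Wcost π = plen π ^ 2 :=
  eLpNorm_two_sq π _

lemma coup_prob {d : ℕ} {π : Measure (Ed d × Ed d)} {μ ν : P2 d} (h : IsCoupling π μ ν) :
    IsProbabilityMeasure π := by
  have := μ.2.1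
  constructor
  have h1 : (π.map Prod.fst) univ = 1 := by rw [h.1]; exact measure_univ
  rwa [Measure.map_apply measurable_fst MeasurableSet.univ, preimage_univ] at h1

lemma coup_fst {d : ℕ} {π : Measure (Ed d × Ed d)} {μ ν : P2 d} (h : IsCoupling π μ ν) :
    MemLp (fun p : Ed d × Ed d => p.1) 2 π ∧ eLpNorm (fun p : Ed d × Ed d => p.1) 2 π = eLpNorm (fun x : Ed d => x) 2 μ.1 := by
  have hm := μ.memLp
  rw [← h.1] at hm ⊢
  have m1 : AEMeasurable (Prod.fst : Ed d × Ed d → Ed d) π := measurable_fst.aemeasurable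
  have m2 : AEStronglyMeasurable (fun x : Ed d => x) (π.map Prod.fst) := by fun_prop
  exact ⟨(memLp_map_measure_iff m2 m1).1 hm, (eLpNorm_map_measure m2 m1).symm⟩

lemma coup_snd {d : ℕ} {π : Measure (Ed d × Ed d)} {μ ν : P2 d} (h : IsCoupling π μ ν) :
    MemLp (fun p : Ed d × Ed d => p.2) 2 π ∧ eLpNorm (fun p : Ed d × Ed d => p.2) 2 π = eLpNorm (fun x : Ed d => x) 2 ν.1 := by
  have hm := ν.memLp
  rw [← h.2] at hm ⊢
  have m1 : AEMeasurable (Prod.snd : Ed d × Ed d → Ed d) π := measurable_snd.aemeasurable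
  have m2 : AEStronglyMeasurable (fun x : Ed d => x) (π.map Prod.snd) := by fun_prop
  exact ⟨(memLp_map_measure_iff m2 m1).1 hm, (eLpNorm_map_measure m2 m1).symm⟩

lemma coup_memLp {d : ℕ} {π : Measure (Ed d × Ed d)} {μ ν : P2 d} (h : IsCoupling π μ ν) :
    MemLp (fun p : Ed d × Ed d => p.1 - p.2) 2 π := (coup_fst h).1.sub (coup_snd h).1

lemma plen_top {d : ℕ} {π : Measure (Ed d × Ed d)} {μ ν : P2 d} (h : IsCoupling π μ ν) : plen π ≠ ⊤ :=
  (coup_memLp h).eLpNorm_ne_top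

lemma W2_le {d : ℕ} {π : Measure (Ed d × Ed d)} {μ ν : P2 d} (h : IsCoupling π μ ν) :
    W2 μ ν ≤ (plen π).toReal := by
  unfold W2
  apply Real.sqrt_le_iff.2 ⟨ENNReal.toReal_nonneg, ?_⟩
  rw [← ENNReal.toReal_pow, ← wcost_eq]
  apply ENNReal.toReal_mono
  · rw [wcost_eq]; exact ENNReal.pow_ne_top (plen_top h)
  · exact iInf₂_le π h

lemma prod_coup {d : ℕ} (μ ν : P2 d) : IsCoupling (μ.1.prod ν.1) μ ν := by
  have := μ.2.1
  have := ν.2.1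
  constructor
  · rw [Measure.map_fst_prod]; simp
  · rw [Measure.map_snd_prod]; simp

lemma exists_coup {d : ℕ} {μ ν : P2 d} {η : ℝ} (h : W2 μ ν < η) :
    ∃ π, IsCoupling π μ ν ∧ (plen π).toReal < η := by
  have hη : 0 < η := (W2_nonneg _ _).trans_lt h
  unfold W2 at h
  rw [Real.sqrt_lt' hη] at h
  have hfin : (⨅ π ∈ {π : Measure (Ed d × Ed d) | IsCoupling π μ ν}, Wcost π) ≠ ⊤ := by
    refine ne_top_of_le_ne_top ?_ (iInf₂_le (μ.1.prod ν.1) (prod_coup μ ν))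
    rw [wcost_eq]; exact ENNReal.pow_ne_top (plen_top (prod_coup μ ν))
  have h2 : (⨅ π ∈ {π : Measure (Ed d × Ed d) | IsCoupling π μ ν}, Wcost π) < ENNReal.ofReal (η ^ 2) :=
    (ENNReal.lt_ofReal_iff_toReal_lt hfin).2 h
  obtain ⟨π, hπ, hc⟩ := by simpa only [iInf_lt_iff] using h2
  refine ⟨π, hπ, ?_⟩
  have : (Wcost π).toReal < η ^ 2 := (ENNReal.lt_ofReal_iff_toReal_lt hc.ne_top).1 hc
  rw [wcost_eq, ENNReal.toReal_pow] at this
  exact lt_of_pow_lt_pow_left₀ 2 hη.le this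

lemma W2_symm_le {d : ℕ} (μ ν : P2 d) : W2 ν μ ≤ W2 μ ν := by
  apply le_of_forall_gt_imp_ge_of_dense
  intro η hη
  obtain ⟨π, hπ, hl⟩ := exists_coup hη
  have hc : IsCoupling (π.map Prod.swap) ν μ := by
    constructor
    · rw [Measure.map_map measurable_fst measurable_swap]; exact hπ.2
    · rw [Measure.map_map measurable_snd measurable_swap]; exact hπ.1
  refine (W2_le hc).trans ?_
  have : plen (π.map Prod.swap) = plen π := by
    unfold plen
    rw [eLpNorm_map_measure (by fun_prop) (by fun_prop)]
    rw [← eLpNorm_neg]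
    congr 1
    ext p; simp
  rw [this]; exact hl.le

lemma W2_symm {d : ℕ} (μ ν : P2 d) : W2 ν μ = W2 μ ν := le_antisymm (W2_symm_le _ _) (W2_symm_le _ _)

lemma W2_self {d : ℕ} (μ : P2 d) : W2 μ μ = 0 := by
  apply le_antisymm _ (W2_nonneg _ _)
  have hc : IsCoupling (μ.1.map fun x => (x, x)) μ μ := by
    constructor
    · rw [Measure.map_map measurable_fst (by fun_prop)]; exact Measure.map_id
    · rw [Measure.map_map measurable_snd (by fun_prop)]; exact Measure.map_id
  refine (W2_le hc).trans (le_of_eq ?_)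
  unfold plen
  rw [eLpNorm_map_measure (by fun_prop) (by fun_prop)]
  have : ((fun p : Ed d × Ed d => p.1 - p.2) ∘ fun x => (x, x)) = fun _ => 0 := by ext; simp
  rw [this]; simp

lemma vs_le {d : ℕ} (μ ν : P2 d) : varsigma2 μ ≤ varsigma2 ν + W2 μ ν := by
  rw [← sub_le_iff_le_add']
  apply le_of_forall_gt_imp_ge_of_dense
  intro η hη
  obtain ⟨π, hπ, hl⟩ := exists_coup hη
  rw [sub_le_iff_le_add', vs_eq, vs_eq, ← (coup_fst hπ).2, ← (coup_snd hπ).2]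
  refine le_trans ?_ (add_le_add_right hl.le _)
  rw [← ENNReal.toReal_add (coup_snd hπ).1.eLpNorm_ne_top (plen_top hπ)]
  apply ENNReal.toReal_mono (ENNReal.add_ne_top.2 ⟨(coup_snd hπ).1.eLpNorm_ne_top, plen_top hπ⟩)
  have e : (fun p : Ed d × Ed d => p.1) = (fun p => p.2) + fun p => p.1 - p.2 := by ext p; simp
  conv_lhs => rw [e]
  exact eLpNorm_add_le (by fun_prop) (by fun_prop) (by norm_num)

lemma push_W2 {d : ℕ} (mhat μ ν : P2 d) {X : Ed d → Ed d} (hX : Measurable X) (h : ν.1 = μ.1.map X)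
    (hm : MemLp (fun x => X x - x) 2 μ.1) :
    W2 mhat ν ≤ W2 mhat μ + (eLpNorm (fun x => X x - x) 2 μ.1).toReal := by
  rw [← sub_le_iff_le_add]
  apply le_of_forall_gt_imp_ge_of_dense
  intro η hη
  obtain ⟨π, hπ, hl⟩ := exists_coup hη
  have hmeas : Measurable (fun p : Ed d × Ed d => (p.1, X p.2)) := by fun_prop
  have hc : IsCoupling (π.map fun p => (p.1, X p.2)) mhat ν := by
    constructor
    · rw [Measure.map_map measurable_fst hmeas]; exact hπ.1
    · rw [Measure.map_map measurable_snd hmeas, h, ← hπ.2, Measure.map_map hX measurable_snd]; rfl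
  have e1 : eLpNorm (fun p : Ed d × Ed d => p.2 - X p.2) 2 π = eLpNorm (fun x => X x - x) 2 μ.1 := by
    rw [← hπ.2, eLpNorm_map_measure (by fun_prop) (by fun_prop), ← eLpNorm_neg]
    congr 1; ext p; simp
  have hle : plen (π.map fun p => (p.1, X p.2)) ≤ plen π + eLpNorm (fun x => X x - x) 2 μ.1 := by
    rw [← e1]
    unfold plen
    rw [eLpNorm_map_measure (by fun_prop) (by fun_prop)]
    have e : ((fun p : Ed d × Ed d => p.1 - p.2) ∘ fun p : Ed d × Ed d => (p.1, X p.2)) =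
      (fun p : Ed d × Ed d => p.1 - p.2) + fun p : Ed d × Ed d => p.2 - X p.2 := by ext p; simp
    rw [e]
    exact eLpNorm_add_le (by fun_prop) (by fun_prop) (by norm_num)
  rw [sub_le_iff_le_add]
  refine (W2_le hc).trans ((ENNReal.toReal_mono (ENNReal.add_ne_top.2 ⟨plen_top hπ, hm.eLpNorm_ne_top⟩) hle).trans ?_)
  rw [ENNReal.toReal_add (plen_top hπ) hm.eLpNorm_ne_top]
  linarith

lemma push_vs {d : ℕ} (μ ν : P2 d) {X : Ed d → Ed d} (hX : Measurable X) (h : ν.1 = μ.1.map X)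
    (hm : MemLp (fun x => X x - x) 2 μ.1) :
    varsigma2 ν ≤ varsigma2 μ + (eLpNorm (fun x => X x - x) 2 μ.1).toReal := by
  rw [vs_eq, vs_eq, h, eLpNorm_map_measure (by fun_prop) (by fun_prop),
    ← ENNReal.toReal_add μ.memLp.eLpNorm_ne_top hm.eLpNorm_ne_top]
  apply ENNReal.toReal_mono (ENNReal.add_ne_top.2 ⟨μ.memLp.eLpNorm_ne_top, hm.eLpNorm_ne_top⟩)
  have e : ((fun x => x) ∘ X) = (fun x => x) + fun x => X x - x := by ext p; simp
  rw [e]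
  exact eLpNorm_add_le (by fun_prop) (by fun_prop) (by norm_num)

lemma push_bd {d : ℕ} (μ : P2 d) {X : Ed d → Ed d} (hX : Measurable X) {K c : ℝ} (hK : 0 ≤ K)
    (hc : 0 ≤ c) (h : ∀ x, ‖X x - x‖ ≤ K * (c + ‖x‖)) :
    MemLp (fun x => X x - x) 2 μ.1 ∧ (eLpNorm (fun x => X x - x) 2 μ.1).toReal ≤ K * (c + varsigma2 μ) := by
  have := μ.2.1
  have hn : MemLp (fun x : Ed d => ‖x‖) 2 μ.1 := μ.memLp.norm
  have hcm : MemLp (fun _ : Ed d => c) 2 μ.1 := memLp_const c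
  have hs : MemLp (fun x : Ed d => c + ‖x‖) 2 μ.1 := hcm.add hn
  have hle : eLpNorm (fun x => X x - x) 2 μ.1 ≤ ENNReal.ofReal K * eLpNorm (fun x : Ed d => c + ‖x‖) 2 μ.1 := by
    apply eLpNorm_le_mul_eLpNorm_of_ae_le_mul
    refine Eventually.of_forall fun x => (h x).trans (le_of_eq ?_)
    rw [Real.norm_of_nonneg (by positivity)]
  have hle2 : eLpNorm (fun x : Ed d => c + ‖x‖) 2 μ.1 ≤ ENNReal.ofReal c + eLpNorm (fun x : Ed d => x) 2 μ.1 := by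
    refine (eLpNorm_add_le (f := fun _ : Ed d => c) (g := fun x : Ed d => ‖x‖) (by fun_prop) (by fun_prop) (by norm_num)).trans ?_
    rw [eLpNorm_norm]
    gcongr
    rw [eLpNorm_const _ (by norm_num) (NeZero.ne _)]
    simp [Real.enorm_eq_ofReal hc]
  have hfin : ENNReal.ofReal c + eLpNorm (fun x : Ed d => x) 2 μ.1 ≠ ⊤ :=
    ENNReal.add_ne_top.2 ⟨ENNReal.ofReal_ne_top, μ.memLp.eLpNorm_ne_top⟩
  have hle3 := hle.trans (mul_le_mul_right hle2 (ENNReal.ofReal K))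
  have hfin3 := ENNReal.mul_ne_top (ENNReal.ofReal_ne_top (r := K)) hfin
  refine ⟨⟨by fun_prop, hle3.trans_lt hfin3.lt_top⟩, ?_⟩
  refine (ENNReal.toReal_mono hfin3 hle3).trans (le_of_eq ?_)
  rw [ENNReal.toReal_mul, ENNReal.toReal_add ENNReal.ofReal_ne_top μ.memLp.eLpNorm_ne_top,
    ENNReal.toReal_ofReal hK, ENNReal.toReal_ofReal hc, vs_eq]

lemma mom_int {d : ℕ} (μ : P2 d) : Integrable (fun x : Ed d => (1 + ‖x‖) ^ 2) μ.1 := by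
  have := μ.2.1
  have hs : MemLp (fun x : Ed d => 1 + ‖x‖) 2 μ.1 := (memLp_const (1 : ℝ)).add μ.memLp.norm
  exact hs.integrable_sq

lemma int_norm_sq {d : ℕ} {α : Type*} [MeasurableSpace α] (π : Measure α) {h : α → Ed d} (hm : MemLp h 2 π) :
    ∫ p, ‖h p‖ ^ 2 ∂π = (eLpNorm h 2 π).toReal ^ 2 := by
  have hms : AEStronglyMeasurable (fun p => ‖h p‖ ^ 2) π := hm.1.norm.pow 2
  rw [← ENNReal.toReal_pow, ← eLpNorm_two_sq,
    integral_eq_lintegral_of_nonneg_ae (Eventually.of_forall fun p => by positivity) hms]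
  congr 1
  apply lintegral_congr; intro p
  rw [ENNReal.ofReal_pow (norm_nonneg _), ofReal_norm, enorm_eq_nnnorm]

lemma mom_le {d : ℕ} (μ : P2 d) : ∫ x : Ed d, (1 + ‖x‖) ^ 2 ∂μ.1 ≤ 2 + 2 * varsigma2 μ ^ 2 := by
  have := μ.2.1
  have h := int_norm_sq μ.1 μ.memLp
  rw [← vs_eq] at h
  have hi : Integrable (fun x : Ed d => ‖x‖ ^ 2) μ.1 := μ.memLp.norm.integrable_sq
  have hi2 : Integrable (fun x : Ed d => 2 * ‖x‖ ^ 2) μ.1 := hi.const_mul 2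
  have h2 : Integrable (fun x : Ed d => (2 : ℝ)) μ.1 := integrable_const _
  have e : ∫ x : Ed d, ((2 : ℝ) + 2 * ‖x‖ ^ 2) ∂μ.1 = 2 + 2 * varsigma2 μ ^ 2 := by
    rw [integral_add h2 hi2, integral_const_mul, h]; simp
  rw [← e]
  apply integral_mono (mom_int μ) (h2.add hi2)
  intro x
  show (1 + ‖x‖) ^ 2 ≤ 2 + 2 * ‖x‖ ^ 2
  nlinarith [sq_nonneg (1 - ‖x‖)]

lemma near_meas {d : ℕ} {μ ν : P2 d} {η S : ℝ} (h : W2 μ ν < η) (hS : 1 ≤ S)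
    (hm : ∫ x : Ed d, (1 + ‖x‖) ^ 2 ∂μ.1 ≤ S) (g : Ed d → ℝ) (L : ℝ) (hL : 0 ≤ L) (hg : Continuous g)
    (hgc : HasCompactSupport g) (hgl : ∀ x y, |g x - g y| ≤ L * (‖x - y‖ * (1 + ‖x‖))) :
    |∫ x, g x ∂μ.1 - ∫ x, g x ∂ν.1| ≤ L * η * S := by
  have hη : 0 < η := (W2_nonneg _ _).trans_lt h
  have := μ.2.1
  have := ν.2.1
  obtain ⟨π, hπ, hl⟩ := exists_coup h
  have := coup_prob hπ
  obtain ⟨K, hK⟩ := hgc.exists_bound_of_continuous hg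
  have e1 : ∫ x, g x ∂μ.1 = ∫ p, g p.1 ∂π := by
    rw [← hπ.1, integral_map (by fun_prop) hg.aestronglyMeasurable]
  have e2 : ∫ x, g x ∂ν.1 = ∫ p, g p.2 ∂π := by
    rw [← hπ.2, integral_map (by fun_prop) hg.aestronglyMeasurable]
  have i1 : Integrable (fun p : Ed d × Ed d => g p.1) π :=
    (integrable_const K).mono' (hg.comp continuous_fst).aestronglyMeasurable (Eventually.of_forall fun p => hK _)
  have i2 : Integrable (fun p : Ed d × Ed d => g p.2) π :=
    (integrable_const K).mono' (hg.comp continuous_snd).aestronglyMeasurable (Eventually.of_forall fun p => hK _)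
  rw [e1, e2, ← integral_sub i1 i2]
  have j1 : Integrable (fun p : Ed d × Ed d => (1 + ‖p.1‖) ^ 2) π := by
    have := mom_int μ
    rw [← hπ.1] at this
    exact (integrable_map_measure (by fun_prop) (by fun_prop)).1 this
  have j1e : ∫ p : Ed d × Ed d, (1 + ‖p.1‖) ^ 2 ∂π ≤ S := by
    rw [← hπ.1, integral_map (by fun_prop) (by fun_prop)] at hm
    exact hm
  have j2 : Integrable (fun p : Ed d × Ed d => ‖p.1 - p.2‖ ^ 2) π := (coup_memLp hπ).norm.integrable_sq
  have j2e : ∫ p : Ed d × Ed d, ‖p.1 - p.2‖ ^ 2 ∂π ≤ η ^ 2 := by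
    rw [int_norm_sq π (coup_memLp hπ)]
    exact pow_le_pow_left₀ ENNReal.toReal_nonneg hl.le 2
  have j3 := (j1.const_mul (η / 2)).add (j2.const_mul (1 / (2 * η)))
  calc |∫ p, (g p.1 - g p.2) ∂π| ≤ ∫ p, |g p.1 - g p.2| ∂π := abs_integral_le_integral_abs
    _ ≤ ∫ p, L * (η / 2 * (1 + ‖p.1‖) ^ 2 + 1 / (2 * η) * ‖p.1 - p.2‖ ^ 2) ∂π := by
        refine integral_mono (i1.sub i2).abs (j3.const_mul L) fun p => (hgl p.1 p.2).trans ?_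
        show L * _ ≤ L * (_ + _)
        gcongr
        have : η / 2 * (1 + ‖p.1‖) ^ 2 + 1 / (2 * η) * ‖p.1 - p.2‖ ^ 2 - ‖p.1 - p.2‖ * (1 + ‖p.1‖)
          = (η * (1 + ‖p.1‖) - ‖p.1 - p.2‖) ^ 2 / (2 * η) := by field_simp; ring
        have h0 : 0 ≤ (η * (1 + ‖p.1‖) - ‖p.1 - p.2‖) ^ 2 / (2 * η) := by positivity
        linarith
    _ = L * (η / 2 * ∫ p : Ed d × Ed d, (1 + ‖p.1‖) ^ 2 ∂π + 1 / (2 * η) * ∫ p : Ed d × Ed d, ‖p.1 - p.2‖ ^ 2 ∂π) := by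
        rw [integral_const_mul, integral_add (j1.const_mul _) (j2.const_mul _), integral_const_mul, integral_const_mul]
    _ ≤ L * (η / 2 * S + 1 / (2 * η) * η ^ 2) := by gcongr
    _ ≤ L * η * S := by
        have : 1 / (2 * η) * η ^ 2 = η / 2 := by field_simp
        rw [this, mul_assoc]
        gcongr
        nlinarith


open scoped ContDiff in
lemma const_of_weak {H : ℝ → ℝ} {a b : ℝ} (hab : a < b) (hH : Continuous H)
    (h : ∀ η : ℝ → ℝ, ContDiff ℝ ∞ η → HasCompactSupport η → tsupport η ⊆ Ioo a b →
      ∫ t in a..b, deriv η t * H t = 0) : ∃ c, ∀ t ∈ Icc a b, H t = c := by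
  let bump : ContDiffBump ((a + b) / 2) := ⟨(b - a) / 8, (b - a) / 4, by linarith, by linarith⟩
  set ρ := bump.normed volume with hρ
  have hρs : ContDiff ℝ ∞ ρ := bump.contDiff_normed
  have hρc : HasCompactSupport ρ := bump.hasCompactSupport_normed
  have hρt : tsupport ρ ⊆ Ioo a b := by
    rw [hρ, bump.tsupport_normed_eq, Real.closedBall_eq_Icc]
    intro x hx
    have h1 : (a + b) / 2 - (b - a) / 4 ≤ x := hx.1
    have h2 : x ≤ (a + b) / 2 + (b - a) / 4 := hx.2
    constructor <;> linarith
  have toI : ∀ g : ℝ → ℝ, (∀ x, x ∉ Ioo a b → g x = 0) → ∫ x in a..b, g x = ∫ x, g x := by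
    intro g hg
    rw [intervalIntegral.integral_of_le hab.le]
    apply setIntegral_eq_integral_of_forall_compl_eq_zero
    intro x hx
    exact hg x fun hx' => hx (Ioo_subset_Ioc_self hx')
  have hout : ∀ g : ℝ → ℝ, tsupport g ⊆ Ioo a b → ∀ x, x ∉ Ioo a b → g x = 0 := fun g hg x hx =>
    image_eq_zero_of_notMem_tsupport fun h' => hx (hg h')
  have hρ1 : ∫ x in a..b, ρ x = 1 := by
    rw [toI ρ (hout ρ hρt)]; exact bump.integral_normed
  set c := ∫ x in a..b, ρ x * H x with hc
  refine ⟨c, ?_⟩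
  have hae := isOpen_Ioo.ae_eq_zero_of_integral_contDiff_smul_eq_zero (U := Ioo a b) (μ := (volume : Measure ℝ))
    (f := fun x => H x - c) ((hH.sub continuous_const).locallyIntegrable.locallyIntegrableOn _) (by
    intro g hg hgc hgt
    simp only [smul_eq_mul]
    rw [← toI _ (fun x hx => by rw [hout g hgt x hx, zero_mul])]
    set I := ∫ x in a..b, g x with hI
    set k : ℝ → ℝ := fun x => g x - I * ρ x with hk
    have hks : ContDiff ℝ ∞ k := hg.sub (contDiff_const.mul hρs)
    have hkc : Continuous k := hks.continuous
    have hgcont := hg.continuous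
    have hρcont := hρs.continuous
    set η : ℝ → ℝ := fun t => ∫ x in a..t, k x with hη
    have hd : ∀ t, HasDerivAt η (k t) t := fun t => hkc.integral_hasStrictDerivAt a t |>.hasDerivAt
    have hdd : deriv η = k := funext fun t => (hd t).deriv
    have hηs : ContDiff ℝ ∞ η := by
      rw [contDiff_infty_iff_deriv, hdd]
      exact ⟨fun t => (hd t).differentiableAt, hks⟩
    set K := tsupport g ∪ tsupport ρ with hK
    have hKc : IsCompact K := hgc.union hρc
    have hKI : K ⊆ Ioo a b := union_subset hgt hρt
    have hρne : (tsupport ρ).Nonempty := by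
      rw [hρ, bump.tsupport_normed_eq]; exact ⟨(a + b) / 2, Metric.mem_closedBall_self bump.rOut_pos.le⟩
    have hKn : K.Nonempty := hρne.mono subset_union_right
    have ha' := hKI (hKc.sInf_mem hKn)
    have hb' := hKI (hKc.sSup_mem hKn)
    have hkz : ∀ x, x ∉ K → k x = 0 := fun x hx => by
      have h1 : g x = 0 := image_eq_zero_of_notMem_tsupport fun h' => hx (Or.inl h')
      have h2 : ρ x = 0 := image_eq_zero_of_notMem_tsupport fun h' => hx (Or.inr h')
      simp [hk, h1, h2]
    have hlo : ∀ x, x < sInf K → k x = 0 := fun x hx => hkz x fun h' =>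
      absurd (csInf_le hKc.bddBelow h') (not_le.2 hx)
    have hhi : ∀ x, sSup K < x → k x = 0 := fun x hx => hkz x fun h' =>
      absurd (le_csSup hKc.bddAbove h') (not_le.2 hx)
    have hkab : ∫ x in a..b, k x = 0 := by
      simp only [hk]
      rw [intervalIntegral.integral_sub (hgcont.intervalIntegrable _ _)
        ((hρcont.const_mul I).intervalIntegrable _ _), intervalIntegral.integral_const_mul, hρ1]
      simp [hI]
    have hηz : ∀ t, t ∉ Icc (sInf K) (sSup K) → η t = 0 := by
      intro t ht
      simp only [hη]
      rcases lt_or_ge t (sInf K) with h1 | h1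
      · rw [intervalIntegral.integral_congr (g := fun _ => 0)]
        · simp
        · intro x hx
          apply hlo
          have : x ≤ max a t := hx.2
          exact this.trans_lt (max_lt ha'.1 h1)
      · have h2 : sSup K < t := by
          by_contra hcon
          exact ht ⟨h1, not_lt.1 hcon⟩
        rw [← intervalIntegral.integral_add_adjacent_intervals (b := b) (hkc.intervalIntegrable _ _)
          (hkc.intervalIntegrable _ _), hkab, zero_add, intervalIntegral.integral_congr (g := fun _ => 0)]
        · simp
        · intro x hx
          apply hhi
          have : min b t ≤ x := hx.1
          exact (lt_min hb'.2 h2).trans_le this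
    have hηsub : tsupport η ⊆ Icc (sInf K) (sSup K) := by
      apply closure_minimal _ isClosed_Icc
      intro t ht
      by_contra hcon
      exact ht (hηz t hcon)
    have hηc : HasCompactSupport η := HasCompactSupport.intro isCompact_Icc hηz
    have e := h η hηs hηc (hηsub.trans fun x hx => ⟨ha'.1.trans_le hx.1, hx.2.trans_lt hb'.2⟩)
    rw [hdd] at e
    have e2 : ∫ t in a..b, k t * H t = (∫ t in a..b, g t * H t) - I * c := by
      simp only [hk, hc]
      rw [← intervalIntegral.integral_const_mul, ← intervalIntegral.integral_sub
        ((by fun_prop : Continuous fun x => g x * H x).intervalIntegrable _ _) ((by fun_prop : Continuous fun x => I * (ρ x * H x)).intervalIntegrable _ _)]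
      congr 1; ext x; ring
    have e3 : ∫ t in a..b, g t * (H t - c) = (∫ t in a..b, g t * H t) - I * c := by
      rw [hI, ← intervalIntegral.integral_mul_const, ← intervalIntegral.integral_sub
        ((by fun_prop : Continuous fun x => g x * H x).intervalIntegrable _ _) ((by fun_prop : Continuous fun x => g x * c).intervalIntegrable _ _)]
      congr 1; ext x; ring
    rw [e3, ← e2, e])
  have : EqOn H (fun _ => c) (Icc a b) := by
    apply Measure.eqOn_Icc_of_ae_eq (volume : Measure ℝ) hab.ne _ hH.continuousOn continuousOn_const
    rw [← restrict_Ioo_eq_restrict_Icc]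
    rw [Filter.EventuallyEq, ae_restrict_iff' measurableSet_Ioo]
    filter_upwards [hae] with x hx hx'
    have := hx hx'
    linarith
  exact this

open scoped ContDiff in
lemma dubois {F G : ℝ → ℝ} {a b : ℝ} (hab : a < b) (hF : Continuous F) (hG : Continuous G)
    (h : ∀ η : ℝ → ℝ, ContDiff ℝ ∞ η → HasCompactSupport η → tsupport η ⊆ Ioo a b →
      ∫ t in a..b, (deriv η t * F t + η t * G t) = 0) {s t : ℝ} (hs : s ∈ Icc a b) (ht : t ∈ Icc a b) :
    F t - F s = ∫ r in s..t, G r := by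
  set P : ℝ → ℝ := fun t => ∫ x in a..t, G x with hP
  have hPd : ∀ t, HasDerivAt P (G t) t := fun t => hG.integral_hasStrictDerivAt a t |>.hasDerivAt
  have hPc : Continuous P := continuous_iff_continuousAt.2 fun t => (hPd t).continuousAt
  obtain ⟨c, hc⟩ := const_of_weak (H := fun t => F t - P t) hab (hF.sub hPc) (by
    intro η hη hηc hηt
    have hz : ∀ x, x ∉ Ioo a b → η x = 0 := fun x hx =>
      image_eq_zero_of_notMem_tsupport fun h' => hx (hηt h')
    have hηd : ∀ t, HasDerivAt η (deriv η t) t := fun t =>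
      ((hη.differentiable (by simp)) t).hasDerivAt
    have hdc : Continuous (deriv η) := hη.continuous_deriv (by simp)
    have hηcont := hη.continuous
    have ibp := intervalIntegral.integral_mul_deriv_eq_deriv_mul (a := a) (b := b) (u := η) (v := P) (u' := deriv η) (v' := G)
      (fun x _ => hηd x) (fun x _ => hPd x) (hdc.intervalIntegrable _ _) (hG.intervalIntegrable _ _)
    rw [hz a (by simp), hz b (by simp)] at ibp
    have e := h η hη hηc hηt
    rw [intervalIntegral.integral_add ((by fun_prop : Continuous fun x => deriv η x * F x).intervalIntegrable _ _)
      ((by fun_prop : Continuous fun x => η x * G x).intervalIntegrable _ _), ibp] at e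
    have : ∀ t, deriv η t * (F t - P t) = deriv η t * F t - deriv η t * P t := fun t => by ring
    simp_rw [this]
    rw [intervalIntegral.integral_sub ((by fun_prop : Continuous fun x => deriv η x * F x).intervalIntegrable _ _)
      ((by fun_prop : Continuous fun x => deriv η x * P x).intervalIntegrable _ _)]
    linarith)
  have e1 := hc s hs
  have e2 := hc t ht
  have : P t - P s = ∫ r in s..t, G r :=
    intervalIntegral.integral_interval_sub_left (hG.intervalIntegrable _ _) (hG.intervalIntegrable _ _)
  linarith

open scoped ContDiff in
lemma dubois_on {F G : ℝ → ℝ} {a b : ℝ} (hab : a < b) (hF : ContinuousOn F (Icc a b)) (hG : ContinuousOn G (Icc a b))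
    (h : ∀ η : ℝ → ℝ, ContDiff ℝ ∞ η → HasCompactSupport η → tsupport η ⊆ Ioo a b →
      ∫ t in a..b, (deriv η t * F t + η t * G t) = 0) {s t : ℝ} (has : a ≤ s) (hst : s ≤ t) (htb : t ≤ b) :
    IntervalIntegrable G volume s t ∧ F t - F s = ∫ r in s..t, G r := by
  have hs : s ∈ Icc a b := ⟨has, hst.trans htb⟩
  have ht : t ∈ Icc a b := ⟨has.trans hst, htb⟩
  have hsub : uIcc s t ⊆ Icc a b := by rw [uIcc_of_le hst]; exact Icc_subset_Icc has htb
  refine ⟨(hG.mono hsub).intervalIntegrable, ?_⟩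
  set F' := IccExtend hab.le (domRestrict (Icc a b) F) with hF'
  set G' := IccExtend hab.le (domRestrict (Icc a b) G) with hG'
  have eF : ∀ x ∈ Icc a b, F' x = F x := fun x hx => by rw [hF', IccExtend_of_mem _ _ hx]; rfl
  have eG : ∀ x ∈ Icc a b, G' x = G x := fun x hx => by rw [hG', IccExtend_of_mem _ _ hx]; rfl
  have := dubois (F := F') (G := G') hab (continuousOn_iff_continuous_domRestrict.1 hF).Icc_extend'
    (continuousOn_iff_continuous_domRestrict.1 hG).Icc_extend' (by
      intro η h1 h2 h3
      rw [← h η h1 h2 h3]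
      apply intervalIntegral.integral_congr
      intro x hx
      rw [uIcc_of_le hab.le] at hx
      simp only [eF x hx, eG x hx]) hs ht
  rw [eF t ht, eF s hs] at this
  rw [this]
  apply intervalIntegral.integral_congr
  intro x hx
  exact eG x (hsub hx)


lemma vs_contOn {d : ℕ} {m : ℝ → P2 d} {a b : ℝ} (h : W2ContinuousOn m a b) :
    ContinuousOn (fun r => varsigma2 (m r)) (Icc a b) := by
  rw [Metric.continuousOn_iff]
  intro c hc ε hε
  obtain ⟨δ, hδ, hh⟩ := h c hc ε hε
  refine ⟨δ, hδ, fun r hr hrc => ?_⟩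
  have h1 := hh r hr (by simpa [Real.dist_eq] using hrc)
  have h2 := vs_le (m r) (m c)
  have h3 := vs_le (m c) (m r)
  rw [W2_symm] at h3
  rw [Real.dist_eq, abs_lt]
  constructor <;> linarith

lemma dpsi_lip {d : ℕ} {ψ : Ed d → ℝ} {A B Λ : ℝ} (h : TestFn ψ A B) {w : Ed d → Ed d} (hΛ : 0 ≤ Λ)
    (hwl : ∀ x y, ‖w x - w y‖ ≤ Λ * ‖x - y‖) (hwg : ∀ x, ‖w x‖ ≤ Λ * (1 + ‖x‖)) (x y : Ed d) :
    |fderiv ℝ ψ x (w x) - fderiv ℝ ψ y (w y)| ≤ (Λ * (A + B)) * (‖x - y‖ * (1 + ‖x‖)) := by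
  have hA := h.A0
  have hB := h.B0
  have e : fderiv ℝ ψ x (w x) - fderiv ℝ ψ y (w y) =
    (fderiv ℝ ψ x - fderiv ℝ ψ y) (w x) + fderiv ℝ ψ y (w x - w y) := by simp
  rw [e]
  have b1 : |(fderiv ℝ ψ x - fderiv ℝ ψ y) (w x)| ≤ (B * ‖x - y‖) * (Λ * (1 + ‖x‖)) := by
    rw [← Real.norm_eq_abs]
    refine (ContinuousLinearMap.le_opNorm _ _).trans ?_
    gcongr
    · exact h.lip x y
    · exact hwg x
  have b2 : |fderiv ℝ ψ y (w x - w y)| ≤ A * (Λ * ‖x - y‖) := by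
    rw [← Real.norm_eq_abs]
    refine (ContinuousLinearMap.le_opNorm _ _).trans ?_
    gcongr
    · exact h.bd y
    · exact hwl x y
  refine (abs_add_le _ _).trans ?_
  have : A * (Λ * ‖x - y‖) ≤ A * (Λ * ‖x - y‖) * (1 + ‖x‖) := by
    have : 0 ≤ A * (Λ * ‖x - y‖) := by positivity
    nlinarith [norm_nonneg x]
  nlinarith

lemma psi_lip {d : ℕ} {ψ : Ed d → ℝ} {A B : ℝ} (h : TestFn ψ A B) (x y : Ed d) :
    |ψ x - ψ y| ≤ A * (‖x - y‖ * (1 + ‖x‖)) := by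
  have hA := h.A0
  have := Convex.norm_image_sub_le_of_norm_fderiv_le (𝕜 := ℝ) (f := ψ) (s := univ) (C := A)
    (fun z _ => (h.smooth.differentiable (by simp)) z) (fun z _ => h.bd z) convex_univ (mem_univ y) (mem_univ x)
  rw [Real.norm_eq_abs] at this
  refine this.trans ?_
  gcongr
  nlinarith [norm_nonneg x, norm_nonneg (x - y)]

open scoped ContDiff in
lemma weak_id {d : ℕ} {U : Type*} {f : Ed d → P2 d → U → Ed d} {u : U}
    {m : ℝ → P2 d} {a b : ℝ} (hcont : ∀ r, Continuous fun x => f x (m r) u) (hs : SolvesCE f u m a b)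
    {ψ : Ed d → ℝ} {A B : ℝ} (h : TestFn ψ A B) (η : ℝ → ℝ) (hη : ContDiff ℝ ∞ η) (hηc : HasCompactSupport η)
    (hηt : tsupport η ⊆ Ioo a b) :
    ∫ t in a..b, (deriv η t * (∫ x, ψ x ∂(m t).1) +
      η t * ∫ x, fderiv ℝ ψ x (f x (m t) u) ∂(m t).1) = 0 := by
  have hχ := hs.2 (fun p => ψ p.1 * η p.2) ((h.smooth.comp contDiff_fst).mul (hη.comp contDiff_snd)) (by
      apply HasCompactSupport.intro (h.cpt.prod hηc)
      rintro ⟨x, t⟩ hxt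
      by_cases hx : x ∈ tsupport ψ
      · have : t ∉ tsupport η := fun ht => hxt ⟨hx, ht⟩
        simp [image_eq_zero_of_notMem_tsupport this]
      · simp [image_eq_zero_of_notMem_tsupport hx]) (by
      have : tsupport (fun p : Ed d × ℝ => ψ p.1 * η p.2) ⊆ univ ×ˢ tsupport η := by
        apply closure_minimal _ (isClosed_univ.prod (isClosed_tsupport η))
        rintro ⟨x, t⟩ hxt
        refine ⟨mem_univ _, subset_tsupport _ ?_⟩
        exact right_ne_zero_of_mul hxt
      exact this.trans (prod_mono le_rfl hηt))
  rw [← hχ]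
  apply intervalIntegral.integral_congr
  intro t _
  have := (m t).2.1
  have hψc := h.smooth.continuous
  obtain ⟨K, hK⟩ := h.cpt.exists_bound_of_continuous hψc
  obtain ⟨K', hK'⟩ := (h.hcs (fun x => f x (m t) u)).exists_bound_of_continuous (h.hcont (hcont t))
  have i1 : Integrable ψ (m t).1 :=
    (integrable_const K).mono' hψc.aestronglyMeasurable (Eventually.of_forall hK)
  have i2 : Integrable (fun x => fderiv ℝ ψ x (f x (m t) u)) (m t).1 :=
    (integrable_const K').mono' (h.hcont (hcont t)).aestronglyMeasurable (Eventually.of_forall hK')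
  simp only
  rw [← integral_const_mul, ← integral_const_mul, ← integral_add (i1.const_mul _) (i2.const_mul _)]
  congr 1
  ext x
  have d1 : deriv (fun s => ψ x * η s) t = ψ x * deriv η t := by
    rw [deriv_const_mul]; exact (hη.differentiable (by simp)) t
  have d2 : fderiv ℝ (fun y => ψ y * η t) x = η t • fderiv ℝ ψ x := by
    rw [fderiv_mul_const]; exact (h.smooth.differentiable (by simp)) x
  rw [d1, d2]
  simp [mul_comm]

lemma linprob_of_solves {d : ℕ} {U : Type*} {f : Ed d → P2 d → U → Ed d} {C₀ C₁ : ℝ} (hC₀ : 0 < C₀) (hC₁ : 0 < C₁)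
    (hLip : ∀ (x y : Ed d) (μ ν : P2 d) (u : U), ‖f x μ u - f y ν u‖ ≤ C₀ * (‖x - y‖ + W2 μ ν))
    (hgrowth : ∀ (x : Ed d) (μ : P2 d) (u : U), ‖f x μ u‖ ≤ C₁ * (1 + ‖x‖ + varsigma2 μ))
    {u : U} {m : ℝ → P2 d} {a b : ℝ} (hab : a < b) (hs : SolvesCE f u m a b) :
    ∃ Λ S, LinProb a b Λ S (fun r => (m r).1) (fun r x => f x (m r) u) := by
  obtain ⟨M, hM⟩ := isCompact_Icc.exists_bound_of_continuousOn (vs_contOn hs.1)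
  have hM' : ∀ r ∈ Icc a b, varsigma2 (m r) ≤ M := fun r hr => (le_abs_self _).trans (hM r hr)
  have hM0 : 0 ≤ M := (norm_nonneg _).trans (hM a (left_mem_Icc.2 hab.le))
  set Λ := 1 + C₀ + 2 * C₁ * (1 + M) with hΛ
  set S := 2 + 2 * M ^ 2 with hS
  have hΛ0 : 0 < Λ := by positivity
  have hCΛ : C₀ ≤ Λ := by
    have : 0 ≤ 2 * C₁ * (1 + M) := by positivity
    linarith
  have hS1 : 1 ≤ S := by nlinarith [sq_nonneg M]
  have hlip : ∀ r x y, ‖f x (m r) u - f y (m r) u‖ ≤ Λ * ‖x - y‖ := by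
    intro r x y
    have := hLip x y (m r) (m r) u
    rw [W2_self, add_zero] at this
    exact this.trans (by gcongr)
  have hgr : ∀ r ∈ Icc a b, ∀ x, ‖f x (m r) u‖ ≤ Λ / 2 * (1 + ‖x‖) := by
    intro r hr x
    refine (hgrowth x (m r) u).trans ?_
    have h1 := hM' r hr
    have : C₁ * (1 + ‖x‖ + varsigma2 (m r)) ≤ C₁ * ((1 + M) * (1 + ‖x‖)) := by
      gcongr
      nlinarith [norm_nonneg x]
    refine this.trans ?_
    rw [← mul_assoc]
    gcongr
    rw [hΛ]; linarith
  have hmom : ∀ r ∈ Icc a b, ∫ x : Ed d, (1 + ‖x‖) ^ 2 ∂(m r).1 ≤ S := by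
    intro r hr
    refine (mom_le (m r)).trans ?_
    have := pow_le_pow_left₀ (vs_nonneg (m r)) (hM' r hr) 2
    linarith
  have hnear : ∀ η > (0 : ℝ), ∀ c ∈ Icc a b, ∃ δ > (0 : ℝ), ∀ r ∈ Icc a b, |r - c| < δ →
      NearT Λ S η (fun r => (m r).1) (fun r x => f x (m r) u) c r := by
    intro η hη c hc
    obtain ⟨δ, hδ, hh⟩ := hs.1 c hc η hη
    refine ⟨δ, hδ, fun r hr hrc => ⟨fun x => ?_, ?_⟩⟩
    · refine (hLip x x (m r) (m c) u).trans ?_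
      have := (hh r hr hrc).le
      have h0 := W2_nonneg (m r) (m c)
      rw [sub_self, norm_zero, zero_add]
      gcongr
    · exact fun g L hL hg hgc hgl => near_meas (hh r hr hrc) hS1 (hmom r hr) g L hL hg hgc hgl
  have hfc : ∀ r, Continuous fun x => f x (m r) u := fun r => cont_of_lip_aux hΛ0.le (hlip r)
  refine ⟨Λ, S, hΛ0, hS1, fun r => (m r).2.1, hlip, hgr, fun r _ => mom_int (m r), hmom, ?_, hnear⟩
  intro ψ A B hψ s t has hst htb
  have hA := hψ.A0
  have hB := hψ.B0
  have small : ∀ (F : ℝ → ℝ) (C : ℝ), 0 ≤ C → (∀ η > (0 : ℝ), ∀ c ∈ Icc a b, ∃ δ > (0 : ℝ), ∀ r ∈ Icc a b,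
      |r - c| < δ → |F r - F c| ≤ C * η) → ContinuousOn F (Icc a b) := by
    intro F C hC hF
    rw [Metric.continuousOn_iff]
    intro c hc ε hε
    obtain ⟨δ, hδ, hh⟩ := hF (ε / (2 * (C + 1))) (by positivity) c hc
    refine ⟨δ, hδ, fun r hr hrc => ?_⟩
    have := hh r hr (by simpa [Real.dist_eq] using hrc)
    rw [Real.dist_eq]
    have e : C * (ε / (2 * (C + 1))) ≤ ε / 2 := by
      rw [mul_div_assoc', div_le_div_iff₀ (by positivity) (by positivity)]
      nlinarith
    linarith
  refine dubois_on hab (F := fun r => ∫ x, ψ x ∂(m r).1) ?_ ?_ (weak_id hfc hs hψ) has hst htb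
  · apply small _ (A * S) (by positivity)
    intro η hη c hc
    obtain ⟨δ, hδ, hh⟩ := hnear η hη c hc
    refine ⟨δ, hδ, fun r hr hrc => ?_⟩
    have := (hh r hr hrc).meas ψ A hA hψ.smooth.continuous hψ.cpt (psi_lip hψ)
    refine this.trans (le_of_eq (by ring))
  · apply small _ (A * Λ + Λ * (A + B) * S) (by positivity)
    intro η hη c hc
    obtain ⟨δ, hδ, hh⟩ := hnear η hη c hc
    refine ⟨δ, hδ, fun r hr hrc => ?_⟩
    have := (m r).2.1
    have h1 := (hh r hr hrc).meas (fun x => fderiv ℝ ψ x (f x (m c) u)) (Λ * (A + B)) (by positivity)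
      (hψ.hcont (hfc c)) (hψ.hcs _) (dpsi_lip hψ hΛ0.le (hlip c) (fun x => (hgr c hc x).trans (by
        gcongr; linarith)))
    have hi : ∀ c', Integrable (fun x => fderiv ℝ ψ x (f x (m c') u)) (m r).1 := fun c' => by
      obtain ⟨K', hK'⟩ := (hψ.hcs (fun x => f x (m c') u)).exists_bound_of_continuous (hψ.hcont (hfc c'))
      exact (integrable_const K').mono' (hψ.hcont (hfc c')).aestronglyMeasurable (Eventually.of_forall hK')
    have h2 : |∫ x, fderiv ℝ ψ x (f x (m r) u) ∂(m r).1 - ∫ x, fderiv ℝ ψ x (f x (m c) u) ∂(m r).1| ≤ A * (Λ * η) := by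
      rw [← integral_sub (hi r) (hi c), ← Real.norm_eq_abs]
      have := norm_integral_le_of_norm_le_const (μ := (m r).1) (C := A * (Λ * η))
        (f := fun x => fderiv ℝ ψ x (f x (m r) u) - fderiv ℝ ψ x (f x (m c) u)) (Eventually.of_forall fun x => by
          rw [← map_sub]
          refine (ContinuousLinearMap.le_opNorm _ _).trans ?_
          gcongr
          · exact hψ.bd x
          · exact (hh r hr hrc).field x)
      simpa using this
    have h3 := abs_sub_le (∫ x, fderiv ℝ ψ x (f x (m r) u) ∂(m r).1) (∫ x, fderiv ℝ ψ x (f x (m c) u) ∂(m r).1)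
      (∫ x, fderiv ℝ ψ x (f x (m c) u) ∂(m c).1)
    nlinarith

lemma LinProb.mono {d : ℕ} {a b Λ S s t : ℝ} {μ : ℝ → Measure (Ed d)} {v : ℝ → Ed d → Ed d}
    (P : LinProb a b Λ S μ v) (has : a ≤ s) (htb : t ≤ b) : LinProb s t Λ S μ v := by
  have hsub : Icc s t ⊆ Icc a b := Icc_subset_Icc has htb
  refine ⟨P.L0, P.S1, P.prob, P.lip, fun r hr => P.growth r (hsub hr), fun r hr => P.mom_int r (hsub hr),
    fun r hr => P.mom r (hsub hr), fun ψ A B h s' t' h1 h2 h3 => P.weak ψ A B h s' t' (has.trans h1) h2 (h3.trans htb), ?_⟩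
  intro η hη c hc
  obtain ⟨δ, hδ, hh⟩ := P.near η hη c (hsub hc)
  exact ⟨δ, hδ, fun r hr => hh r (hsub hr)⟩

/-- One-piece estimate. -/
lemma piece_est {d : ℕ} {U : Type*} {f : Ed d → P2 d → U → Ed d} {C₀ C₁ : ℝ} (hC₀ : 0 < C₀) (hC₁ : 0 < C₁)
    (hLip : ∀ (x y : Ed d) (μ ν : P2 d) (u : U), ‖f x μ u - f y ν u‖ ≤ C₀ * (‖x - y‖ + W2 μ ν))
    (hgrowth : ∀ (x : Ed d) (μ : P2 d) (u : U), ‖f x μ u‖ ≤ C₁ * (1 + ‖x‖ + varsigma2 μ))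
    {u : U} {m : ℝ → P2 d} {a b : ℝ} (hab : a < b) (hs : SolvesCE f u m a b) (mhat : P2 d)
    {s t : ℝ} (has : a ≤ s) (hst : s < t) (htb : t ≤ b) {g : ℝ} (hg : ∀ r ∈ Icc s t, varsigma2 (m r) ≤ g)
    (hβ : C₁ * (t - s) < 1) :
    W2 mhat (m t) ≤ W2 mhat (m s) + C₁ * (t - s) / (1 - C₁ * (t - s)) * (1 + g + varsigma2 (m s)) ∧
    varsigma2 (m t) ≤ varsigma2 (m s) + C₁ * (t - s) / (1 - C₁ * (t - s)) * (1 + g + varsigma2 (m s)) := by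
  obtain ⟨Λ, S, P⟩ := linprob_of_solves hC₀ hC₁ hLip hgrowth hab hs
  have hg0 : 0 ≤ g := (vs_nonneg (m s)).trans (hg s (left_mem_Icc.2 hst.le))
  have hts : 0 < t - s := by linarith
  have h1 : 0 < 1 - C₁ * (t - s) := by linarith
  obtain ⟨X, hX, hmap, hb⟩ := push_exists hst (P.mono has htb) hC₁ hg0 (fun r hr x => (hgrowth x (m r) u).trans (by
    have := hg r hr
    gcongr)) hβ
  obtain ⟨hm, hle⟩ := push_bd (m s) hX (K := C₁ * (t - s) / (1 - C₁ * (t - s))) (c := 1 + g) (by positivity)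
    (by positivity) (fun x => (hb x).trans (le_of_eq (by ring)))
  have e1 := push_W2 mhat (m s) (m t) hX hmap hm
  have e2 := push_vs (m s) (m t) hX hmap hm
  constructor <;> linarith


lemma vs_gronwall {d : ℕ} {U : Type*} {f : Ed d → P2 d → U → Ed d} {C₀ C₁ : ℝ} (hC₀ : 0 < C₀) (hC₁ : 0 < C₁)
    (hLip : ∀ (x y : Ed d) (μ ν : P2 d) (u : U), ‖f x μ u - f y ν u‖ ≤ C₀ * (‖x - y‖ + W2 μ ν))
    (hgrowth : ∀ (x : Ed d) (μ : P2 d) (u : U), ‖f x μ u‖ ≤ C₁ * (1 + ‖x‖ + varsigma2 μ))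
    {u : U} {m : ℝ → P2 d} {a b : ℝ} (hab : a < b) (hs : SolvesCE f u m a b) :
    ∀ t ∈ Icc a b, varsigma2 (m t) ≤
      (varsigma2 (m a) + C₁ * (b - a)) * Real.exp (2 * C₁ * (b - a)) := by
  have hcont := vs_contOn hs.1
  have key := le_gronwallBound_of_liminf_deriv_right_le (f := fun r => varsigma2 (m r))
    (f' := fun r => C₁ * (1 + 2 * varsigma2 (m r))) (δ := varsigma2 (m a)) (K := 2 * C₁) (ε := C₁)
    hcont (by
      intro x hx r hr
      set g := varsigma2 (m x) with hg
      have hg0 : 0 ≤ g := vs_nonneg _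
      have ht : Tendsto (fun h : ℝ => C₁ / (1 - C₁ * h) * (1 + (g + h) + g)) (𝓝[>] 0) (𝓝 (C₁ * (1 + 2 * g))) := by
        have : ContinuousAt (fun h : ℝ => C₁ / (1 - C₁ * h) * (1 + (g + h) + g)) 0 := by
          apply ContinuousAt.mul
          · apply ContinuousAt.div (by fun_prop) (by fun_prop); simp
          · fun_prop
        have h2 := this.tendsto
        have e : C₁ / (1 - C₁ * 0) * (1 + (g + 0) + g) = C₁ * (1 + 2 * g) := by
          rw [mul_zero, sub_zero, div_one]; ring
        rw [e] at h2
        exact h2.mono_left nhdsWithin_le_nhds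
      have ev1 := ht.eventually (gt_mem_nhds hr)
      have ev2 : ∀ᶠ h in 𝓝[>] (0 : ℝ), h < 1 / C₁ :=
        nhdsWithin_le_nhds (gt_mem_nhds (by positivity))
      obtain ⟨h, ⟨e1, e2⟩, hh0⟩ := ((ev1.and ev2).and self_mem_nhdsWithin).exists
      have hh0 : 0 < h := hh0
      have hC : C₁ * h < 1 := by rw [lt_div_iff₀ hC₁] at e2; linarith
      obtain ⟨δ, hδ, hd⟩ := Metric.continuousOn_iff.1 hcont x (Ico_subset_Icc_self hx) h hh0
      apply Eventually.frequently
      have ev3 : Ioo x (x + min (min δ h) (b - x)) ∈ 𝓝[>] x := Ioo_mem_nhdsGT (by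
        have : 0 < b - x := by linarith [hx.2]
        have : 0 < min (min δ h) (b - x) := by positivity
        linarith)
      filter_upwards [ev3] with z hz
      have hzx : 0 < z - x := by linarith [hz.1]
      have hz2 : z - x < min (min δ h) (b - x) := by linarith [hz.2]
      have hz3 : z - x < δ := hz2.trans_le ((min_le_left _ _).trans (min_le_left _ _))
      have hz4 : z - x < h := hz2.trans_le ((min_le_left _ _).trans (min_le_right _ _))
      have hz5 : z - x < b - x := hz2.trans_le (min_le_right _ _)
      have hCz : C₁ * (z - x) ≤ C₁ * h := by gcongr
      have p := (piece_est hC₀ hC₁ hLip hgrowth hab hs (m x) hx.1 hz.1 (by linarith) (g := g + h) (by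
        intro r' hr'
        have := hd r' ⟨hx.1.trans hr'.1, hr'.2.trans (by linarith)⟩ (by
          rw [Real.dist_eq, abs_of_nonneg (by linarith [hr'.1])]; linarith [hr'.2])
        rw [Real.dist_eq] at this
        have := (abs_lt.1 this).2
        linarith) (by linarith)).2
      rw [← hg] at p
      have hq : (z - x)⁻¹ * (varsigma2 (m z) - g) ≤ C₁ / (1 - C₁ * (z - x)) * (1 + (g + h) + g) := by
        rw [inv_mul_le_iff₀ hzx]
        have e4 : (z - x) * (C₁ / (1 - C₁ * (z - x)) * (1 + (g + h) + g)) =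
            C₁ * (z - x) / (1 - C₁ * (z - x)) * (1 + (g + h) + g) := by ring
        rw [e4]; linarith
      refine hq.trans_lt (lt_of_le_of_lt ?_ e1)
      have : 0 < 1 - C₁ * h := by linarith
      gcongr) le_rfl (by
      intro x _
      apply le_of_eq; ring)
  intro t ht
  refine (key t ht).trans ?_
  rw [gronwallBound_of_K_ne_0 (by positivity)]
  have hta : 0 ≤ t - a := by linarith [ht.1]
  have hta2 : t - a ≤ b - a := by linarith [ht.2]
  have hv := vs_nonneg (m a)
  have e1 : varsigma2 (m a) * Real.exp (2 * C₁ * (t - a)) + C₁ / (2 * C₁) * (Real.exp (2 * C₁ * (t - a)) - 1) ≤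
      (varsigma2 (m a) + C₁ * (t - a)) * Real.exp (2 * C₁ * (t - a)) := by
    have h1 : C₁ / (2 * C₁) = 1 / 2 := by field_simp
    rw [h1]
    set y := 2 * C₁ * (t - a) with hy
    have h2 := Real.add_one_le_exp (-y)
    have h3 : Real.exp (-y) * Real.exp y = 1 := by rw [← Real.exp_add]; simp
    have h4 : (-y + 1) * Real.exp y ≤ 1 := by
      exact (mul_le_mul_of_nonneg_right h2 (Real.exp_pos y).le).trans h3.le
    have h5 : C₁ * (t - a) = y / 2 := by rw [hy]; ring
    rw [h5]
    nlinarith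
  refine e1.trans ?_
  gcongr

lemma apriori {d : ℕ} {U : Type*} {f : Ed d → P2 d → U → Ed d} {C₀ C₁ : ℝ} (hC₀ : 0 < C₀) (hC₁ : 0 < C₁)
    (hLip : ∀ (x y : Ed d) (μ ν : P2 d) (u : U), ‖f x μ u - f y ν u‖ ≤ C₀ * (‖x - y‖ + W2 μ ν))
    (hgrowth : ∀ (x : Ed d) (μ : P2 d) (u : U), ‖f x μ u‖ ≤ C₁ * (1 + ‖x‖ + varsigma2 μ))
    {u : U} {m : ℝ → P2 d} {a b : ℝ} (hab : a < b) (hs : SolvesCE f u m a b) (mhat : P2 d)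
    {t : ℝ} (hat : a < t) (htb : t ≤ b) :
    W2 mhat (m t) ≤ W2 mhat (m a) + C₁ * (t - a) *
      (1 + 2 * ((varsigma2 (m a) + C₁ * (b - a)) * Real.exp (2 * C₁ * (b - a)))) := by
  set Γ := (varsigma2 (m a) + C₁ * (b - a)) * Real.exp (2 * C₁ * (b - a)) with hΓ
  have hΓb : ∀ t ∈ Icc a b, varsigma2 (m t) ≤ Γ := vs_gronwall hC₀ hC₁ hLip hgrowth hab hs
  have hta : 0 < t - a := by linarith
  have step : ∀ N : ℕ, 0 < N → C₁ * ((t - a) / N) < 1 → W2 mhat (m t) ≤ W2 mhat (m a) +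
      C₁ * (t - a) / (1 - C₁ * ((t - a) / N)) * (1 + 2 * Γ) := by
    intro N hN hlt
    have hN' : (0 : ℝ) < N := by exact_mod_cast hN
    set h := (t - a) / N with hh
    have hh0 : 0 < h := by positivity
    have hNh : N * h = t - a := by rw [hh]; field_simp
    have h1 : 0 < 1 - C₁ * h := by linarith
    have ind : ∀ k : ℕ, k ≤ N → W2 mhat (m (a + k * h)) ≤ W2 mhat (m a) +
        k * (C₁ * h / (1 - C₁ * h) * (1 + 2 * Γ)) := by
      intro k
      induction k with
      | zero => intro _; simp
      | succ k ih =>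
        intro hk
        have ih' := ih (by omega)
        have hk' : ((k + 1 : ℕ) : ℝ) ≤ N := by exact_mod_cast hk
        have hkh : ((k + 1 : ℕ) : ℝ) * h ≤ N * h := by gcongr
        have e : a + ((k + 1 : ℕ) : ℝ) * h - (a + k * h) = h := by push_cast; ring
        have hk0 : 0 ≤ (k : ℝ) * h := by positivity
        have hlt' : a + k * h < a + ((k + 1 : ℕ) : ℝ) * h := by linarith
        have hm1 : a + k * h ∈ Icc a b := ⟨by linarith, by linarith⟩
        have p := (piece_est hC₀ hC₁ hLip hgrowth hab hs mhat (s := a + k * h) (t := a + ((k + 1 : ℕ) : ℝ) * h)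
          (by linarith) hlt' (by linarith) (g := Γ) (fun r hr => hΓb r ⟨hm1.1.trans hr.1, hr.2.trans (by linarith)⟩)
          (by rw [e]; exact hlt)).1
        rw [e] at p
        have q : C₁ * h / (1 - C₁ * h) * (1 + Γ + varsigma2 (m (a + k * h))) ≤ C₁ * h / (1 - C₁ * h) * (1 + 2 * Γ) := by
          have := hΓb _ hm1
          apply mul_le_mul_of_nonneg_left _ (by positivity); linarith
        have e3 : (((k + 1 : ℕ) : ℝ)) * (C₁ * h / (1 - C₁ * h) * (1 + 2 * Γ)) =
          k * (C₁ * h / (1 - C₁ * h) * (1 + 2 * Γ)) + C₁ * h / (1 - C₁ * h) * (1 + 2 * Γ) := by push_cast; ring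
        rw [e3]
        linarith
    have := ind N le_rfl
    rw [hNh, add_sub_cancel] at this
    refine this.trans (le_of_eq ?_)
    rw [← hNh]; ring
  have hz : Tendsto (fun N : ℕ => (t - a) / (N : ℝ)) atTop (𝓝 0) := tendsto_const_div_atTop_nhds_zero_nat _
  have hlim : Tendsto (fun N : ℕ => W2 mhat (m a) + C₁ * (t - a) / (1 - C₁ * ((t - a) / N)) * (1 + 2 * Γ)) atTop
      (𝓝 (W2 mhat (m a) + C₁ * (t - a) / (1 - C₁ * 0) * (1 + 2 * Γ))) := by
    refine Tendsto.const_add _ (Tendsto.mul_const _ (Tendsto.div tendsto_const_nhds ?_ (by simp)))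
    exact (hz.const_mul C₁).const_sub 1
  have : W2 mhat (m t) ≤ W2 mhat (m a) + C₁ * (t - a) / (1 - C₁ * 0) * (1 + 2 * Γ) := by
    apply ge_of_tendsto hlim
    have ev := (hz.const_mul C₁).eventually (gt_mem_nhds (by simp : C₁ * 0 < 1))
    filter_upwards [ev, eventually_gt_atTop 0] with N h1 h2
    exact step N h2 h1
  simpa using this

lemma solves_shift {d : ℕ} {U : Type*} {f : Ed d → P2 d → U → Ed d} {u : U} {m : ℝ → P2 d} {a b : ℝ}
    (hs : SolvesCE f u m a b) : SolvesCE f u (fun r => m (r + a)) 0 (b - a) := by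
  constructor
  · intro t ht η hη
    obtain ⟨δ, hδ, h⟩ := hs.1 (t + a) ⟨by linarith [ht.1], by linarith [ht.2]⟩ η hη
    exact ⟨δ, hδ, fun s hs' hst => h (s + a) ⟨by linarith [hs'.1], by linarith [hs'.2]⟩ (by simpa using hst)⟩
  · intro χ hχ hc ht
    let e : Ed d × ℝ ≃ₜ Ed d × ℝ := (Homeomorph.refl _).prodCongr (Homeomorph.subRight a)
    have h := hs.2 (fun p => χ (p.1, p.2 - a)) (hχ.comp (contDiff_fst.prodMk (contDiff_snd.sub contDiff_const)))
      (hc.comp_homeomorph e) (by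
        have h1 : tsupport (fun p : Ed d × ℝ => χ (p.1, p.2 - a)) ⊆ e ⁻¹' (tsupport χ) :=
          closure_minimal (fun p hp => subset_tsupport χ hp) ((isClosed_tsupport χ).preimage e.continuous)
        intro p hp
        have := (ht (h1 hp)).2
        have h3 : 0 < p.2 - a ∧ p.2 - a < b - a := this
        exact ⟨mem_univ _, by linarith [h3.1], by linarith [h3.2]⟩)
    have e1 := intervalIntegral.integral_comp_sub_right (a := a) (b := b) (fun t => ∫ x, (deriv (fun s : ℝ => χ (x, s)) t +
      fderiv ℝ (fun y : Ed d => χ (y, t)) x (f x (m (t + a)) u)) ∂(m (t + a)).1) a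
    rw [sub_self] at e1
    refine Eq.trans ?_ h
    refine (e1.symm).trans ?_
    apply intervalIntegral.integral_congr
    intro t _
    simp only [sub_add_cancel]
    congr 1
    ext x
    rw [deriv_comp_sub_const (f := fun s => χ (x, s))]


lemma step_bound {d : ℕ} {U : Type*} {f : Ed d → P2 d → U → Ed d} {C₀ C₁ : ℝ} (hC₀ : 0 < C₀) (hC₁ : 0 < C₁)
    (hLip : ∀ (x y : Ed d) (μ ν : P2 d) (u : U), ‖f x μ u - f y ν u‖ ≤ C₀ * (‖x - y‖ + W2 μ ν))
    (hgrowth : ∀ (x : Ed d) (μ : P2 d) (u : U), ‖f x μ u‖ ≤ C₁ * (1 + ‖x‖ + varsigma2 μ))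
    {u : U} {m : ℝ → P2 d} {a b : ℝ} (hab : a < b) (hs : SolvesCE f u m a b) (mhat : P2 d)
    {t : ℝ} (hat : a < t) (htb : t ≤ b) {δ q R : ℝ} (hδ : b - a ≤ δ)
    (h1 : W2 mhat (m a) ≤ q) (h2 : W2 mhat (m a) ≤ R) (hR : 0 < R)
    (hτ : b - a ≤ q / C2const C₁ δ (varsigma2 mhat) R) : W2 mhat (m t) < 2 * q := by
  have hap := apriori hC₀ hC₁ hLip hgrowth hab hs mhat hat htb
  have hv : varsigma2 (m a) ≤ varsigma2 mhat + R := by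
    have := vs_le (m a) mhat
    rw [W2_symm] at this
    linarith
  have hv0 := vs_nonneg (m a)
  have hv1 := vs_nonneg mhat
  have hδ0 : 0 < δ := by linarith
  have hba : 0 < b - a := by linarith
  set A := 1 + 2 * (C₁ * δ + varsigma2 mhat + R) * Real.exp (2 * C₁ * δ) with hA
  have hA0 : 0 < A := by positivity
  have hexp : 1 < Real.exp (C₁ * δ) := Real.one_lt_exp_iff.2 (by positivity)
  have hle : 1 + 2 * ((varsigma2 (m a) + C₁ * (b - a)) * Real.exp (2 * C₁ * (b - a))) ≤ A := by
    have e1 : varsigma2 (m a) + C₁ * (b - a) ≤ C₁ * δ + varsigma2 mhat + R := by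
      have : C₁ * (b - a) ≤ C₁ * δ := by gcongr
      linarith
    have e2 : (varsigma2 (m a) + C₁ * (b - a)) * Real.exp (2 * C₁ * (b - a)) ≤
        (C₁ * δ + varsigma2 mhat + R) * Real.exp (2 * C₁ * δ) := by gcongr
    rw [hA]; linarith
  have hC2 : C2const C₁ δ (varsigma2 mhat) R = C₁ * Real.exp (C₁ * δ) * A := rfl
  rw [hC2, le_div_iff₀ (by positivity)] at hτ
  have e3 : C₁ * (t - a) * (1 + 2 * ((varsigma2 (m a) + C₁ * (b - a)) * Real.exp (2 * C₁ * (b - a)))) ≤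
      C₁ * (b - a) * A := by
    have : t - a ≤ b - a := by linarith
    have : 0 ≤ t - a := by linarith
    gcongr
  have e4 : C₁ * (b - a) * A < (b - a) * (C₁ * Real.exp (C₁ * δ) * A) := by
    have e5 : (b - a) * (C₁ * Real.exp (C₁ * δ) * A) = C₁ * (b - a) * A * Real.exp (C₁ * δ) := by ring
    rw [e5]
    exact lt_mul_of_one_lt_right (by positivity) hexp
  linarith

lemma mem_GsetK_of_lt {d : ℕ} {mhat : P2 d} {φ : P2 d → ℝ} (hφ : UCmem mhat φ) (κ : ℝ) {R : ℝ} {μ : P2 d}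
    (h : W2 mhat μ < Rfun mhat φ R) : μ ∈ GsetK mhat φ κ R := by
  have hne : {r : ℝ | 0 ≤ r ∧ ballW mhat r ⊆ Gset mhat φ R}.Nonempty := by
    by_contra hn
    rw [Set.not_nonempty_iff_eq_empty] at hn
    rw [Rfun, hn, Real.sSup_empty] at h
    linarith [W2_nonneg mhat μ]
  obtain ⟨r, hr, hlt⟩ := exists_lt_of_lt_csSup hne h
  have h1 : φ μ ≤ Ifun mhat φ R / 2 := hr.2 (show W2 mhat μ ≤ r from hlt.le)
  refine le_trans ?_ h1
  have hb : BddBelow (range fun ν : P2 d => φ ν + 1 / (2 * κ ^ 2) * W2 μ ν ^ 2) := by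
    refine ⟨0, ?_⟩
    rintro _ ⟨ν, rfl⟩
    have := hφ.nonneg ν
    positivity
  have := ciInf_le hb μ
  simpa [infConv, W2_self] using this

/-- invariance of `G_{Q_i}^{κ_i}` under the global feedback `k̂`. -/
theorem statement16 {d : ℕ} {U : Type*} [MetricSpace U] [CompactSpace U]
    (f : Ed d → P2 d → U → Ed d) (C₀ C₁ : ℝ) (hC₀ : 0 < C₀) (hC₁ : 0 < C₁)
    (hcont : ∀ (x : Ed d) (μ : P2 d), Continuous fun u : U => f x μ u)
    (hLip : ∀ (x y : Ed d) (μ ν : P2 d) (u : U),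
      ‖f x μ u - f y ν u‖ ≤ C₀ * (‖x - y‖ + W2 μ ν))
    (hgrowth : ∀ (x : Ed d) (μ : P2 d) (u : U), ‖f x μ u‖ ≤ C₁ * (1 + ‖x‖ + varsigma2 μ))
    (mhat : P2 d) (φ : P2 d → ℝ) (hφ : UCmem mhat φ)
    (Q : ℤ → ℝ) (hQpos : ∀ i : ℤ, 0 < Q i)
    (hQR : ∀ i : ℤ, 2 * Q i ≤ Rfun mhat φ (Q (i + 1)))
    (κs : ℤ → ℝ) (hκs : ∀ i : ℤ, κs i ∈ Ioc (0 : ℝ) 1)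
    (hGB : ∀ i : ℤ, GsetK mhat φ (κs i) (Q i) ⊆ ballW mhat (Q i))
    (hcover : (⋃ i : ℤ,
        (GsetK mhat φ (κs (i + 1)) (Q (i + 1)) \ GsetK mhat φ (κs i) (Q i)))
      ∪ {mhat} = (univ : Set (P2 d)))
    (δs : ℤ → ℝ) (hδs : ∀ i : ℤ, 0 < δs i)
    (ks : ℤ → P2 d → U)
    (hks : ∀ i : ℤ,
      ∀ m₀ ∈ GsetK mhat φ (κs i) (Q i) \ GsetK mhat φ (κs (i - 1)) (Q (i - 1)),
      ∀ τ : ℝ, 0 < τ → τ ≤ δs i → ∀ mc : ℝ → P2 d, SolvesCE f (ks i m₀) mc 0 τ →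
        mc 0 = m₀ → ∀ t ∈ Icc (0 : ℝ) τ, mc t ∈ GsetK mhat φ (κs i) (Q i))
    (u₀ : U) (khat : P2 d → U)
    (hkhat : ∀ i : ℤ,
      ∀ mm ∈ GsetK mhat φ (κs i) (Q i) \ GsetK mhat φ (κs (i - 1)) (Q (i - 1)),
      khat mm = ks i mm)
    (hkhat0 : khat mhat = u₀)
    (i : ℤ) (δhat : ℝ) (hδhat : 0 < δhat)
    (hδhat2 : δhat < min (δs i) (Q (i - 1) / C2const C₁ (δs i) (varsigma2 mhat) (Q i)))
    (θ : ℕ → ℝ) (hθ : IsPartition θ)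
    (hstep : StepIn θ δhat (min (δs i) (Q (i - 1) / C2const C₁ (δs i) (varsigma2 mhat) (Q i))))
    (mstar : P2 d) (hmstar : mstar ∈ GsetK mhat φ (κs i) (Q i))
    (m : ℝ → P2 d) (hm : IsTraj f khat θ mstar m) :
    ∀ t : ℝ, 0 ≤ t → m t ∈ GsetK mhat φ (κs i) (Q i) := by
  obtain ⟨hm0, hsol⟩ := hm
  obtain ⟨hθ0, hθm, hθt⟩ := hθ
  have hstepG : ∀ j : ℕ, m (θ j) ∈ GsetK mhat φ (κs i) (Q i) →
      ∀ t ∈ Icc (θ j) (θ (j + 1)), m t ∈ GsetK mhat φ (κs i) (Q i) := by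
    intro j hj t ht
    have hlt : θ j < θ (j + 1) := hθm (Nat.lt_succ_self j)
    have hτ1 : θ (j + 1) - θ j ≤ δs i := (hstep j).2.trans (min_le_left _ _)
    have hτ2 := (hstep j).2.trans (min_le_right _ _)
    by_cases hin : m (θ j) ∈ GsetK mhat φ (κs (i - 1)) (Q (i - 1))
    · rcases eq_or_lt_of_le ht.1 with h | h
      · rw [← h]; exact hj
      · have hB1 : W2 mhat (m (θ j)) ≤ Q (i - 1) := hGB _ hin
        have hB2 : W2 mhat (m (θ j)) ≤ Q i := hGB _ hj
        have hlt2 := step_bound hC₀ hC₁ hLip hgrowth hlt (hsol j) mhat h ht.2 hτ1 hB1 hB2 (hQpos i) hτ2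
        have hR := hQR (i - 1)
        rw [sub_add_cancel] at hR
        exact mem_GsetK_of_lt hφ (κs i) (hlt2.trans_le hR)
    · have hmem : m (θ j) ∈ GsetK mhat φ (κs i) (Q i) \ GsetK mhat φ (κs (i - 1)) (Q (i - 1)) := ⟨hj, hin⟩
      have hs := solves_shift (hsol j)
      rw [hkhat i _ hmem] at hs
      have := hks i _ hmem (θ (j + 1) - θ j) (by linarith) hτ1 _ hs (by simp) (t - θ j)
        ⟨by linarith [ht.1], by linarith [ht.2]⟩
      simpa using this
  have hnode : ∀ j : ℕ, m (θ j) ∈ GsetK mhat φ (κs i) (Q i) := by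
    intro j
    induction j with
    | zero => rw [hθ0, hm0]; exact hmstar
    | succ j ih => exact hstepG j ih _ ⟨(hθm (Nat.lt_succ_self j)).le, le_rfl⟩
  intro t ht
  have hex : ∃ j : ℕ, t < θ j := (hθt.eventually_gt_atTop t).exists
  classical
  have h1 := Nat.find_spec hex
  have h2 : Nat.find hex ≠ 0 := by
    intro h
    rw [h, hθ0] at h1
    linarith
  obtain ⟨n, hn⟩ := Nat.exists_eq_succ_of_ne_zero h2
  have h3 := Nat.find_min hex (m := n) (by omega)
  rw [hn] at h1
  exact hstepG n (hnode n) t ⟨not_lt.1 h3, h1.le⟩
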